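/- Let f : Y ⇢ S be a dominant rational map between normal complex projective varieties, and let y ∈ Y be a point of codimension one. Then there exists a normal projective variety S' birational to S such that the induced dominant rational map f' : Y ⇢ S' is defined at y and maps y either to the generic point of S' or to the generic point of a divisor on S' (i.e. to a point of codimension one of S'). -/

import Mathlib

/-!
The local ring `R` of `Y` at `y` is a discrete valuation ring with fraction field `L = ℂ(Y)`, and
`f` gives an embedding of `K = ℂ(S)` into `L`. A projective model of `K` on which `f` is defined at
`y` corresponds to a choice of coordinates in the valuation ring `𝒪 = R ∩ K`; the point `y` then
maps to the centre of `𝒪` on that model. The theorem holds because the residue field of `𝒪` is large: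
its transcendence degree over `ℂ` is at least `trdeg K - 1`.

* Transcendence degrees. Since `R` is essentially of finite type, its residue field `κ` satisfies
  `trdeg L ≤ trdeg κ + 1` (`trdeg_le_residueField_add_one`, via Zariski's main theorem). Lifts to `R`
  of elements of `κ` that are algebraically independent over the residue field `κ₀` of `𝒪` are
  algebraically independent over `K` (`algebraicIndependent_of_residue`), so
  `trdeg_{κ₀} κ ≤ trdeg_K L`. Subtracting, `trdeg K ≤ trdeg κ₀ + 1`. Hence once lifts of a
  transcendence basis of `κ₀` belong to a subalgebra `B ⊆ 𝒪`, the centre of `𝒪` on `B` has height at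
  most one (`exists_finset_height_le_one`): a nonzero prime strictly below it would produce
  too many algebraically independent elements.

* Normalization inside projective space. For a finite set `s` generating `K`, the integral closure of
  the Rees algebra `ℂ[t, x t : x ∈ s]` in `K[t]` is a finite module, so a suitable degree-`d` piece
  `M_d` satisfies `M_{dn} = M_d ^ n` for `n ≥ 1`. A spanning set `z` of `M_d` therefore gives
  projective coordinates all of whose standard charts `ℂ[z_j / z_i]` are integrally closed
  (`exists_normal_projective_coordinates`). The chart with `z_0 = 1` contains `s` and is integral over
  `ℂ[s]`, so it stays inside `𝒪` if `s ⊆ 𝒪`.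

* Geometry. The model `S'` is the scheme-theoretic image of `Spec K → ℙᴺ` given by `z`
  (`exists_normal_projective_model`). Two finitely generated algebras with fraction field `K` have a
  common principal localization, which gives the birational isomorphism (`exists_common_open`), and
  the map from the chart to `R` spreads out to a morphism on a neighbourhood of `y`
  (`exists_birational_and_extension`).
-/

noncomputable section
open AlgebraicGeometry MvPolynomial CategoryTheory

attribute [local instance] MvPolynomial.gradedAlgebra

/-- Projective `N`-space over `ℂ`, as `Proj ℂ[x₀,…,x_N]`. -/
abbrev ProjSpace (N : ℕ) : Scheme := Proj (homogeneousSubmodule (Fin (N+1)) ℂ)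

/-- The structure morphism `ℙᴺ_ℂ → Spec ℂ`. -/
def projSpaceToSpecC (N : ℕ) : ProjSpace N ⟶ Spec (.of ℂ) :=
  Proj.toSpecZero (homogeneousSubmodule (Fin (N+1)) ℂ) ≫
    Spec.map (CommRingCat.ofHom (algebraMap ℂ ((homogeneousSubmodule (Fin (N+1)) ℂ) 0)))

/-- A scheme is normal if all its local rings are integrally closed (domains). -/
def IsNormalScheme (X : Scheme) : Prop :=
  ∀ x : X, IsIntegrallyClosed (X.presheaf.stalk x)

/-- `X` (with structure morphism `sX`) is a complex projective variety: an integral scheme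
of finite type over `ℂ` admitting a closed immersion into some `ℙᴺ_ℂ` over `ℂ`. -/
def IsProjectiveVariety (X : Scheme) (sX : X ⟶ Spec (.of ℂ)) : Prop :=
  IsIntegral X ∧ LocallyOfFiniteType sX ∧ IsProper sX ∧
    ∃ (N : ℕ) (i : X ⟶ ProjSpace N), IsClosedImmersion i ∧ i ≫ projSpaceToSpecC N = sX

/-- A point of a scheme has codimension (at most) `c` iff its local ring has Krull
dimension (at most) `c`. -/
def ptCodim {X : Scheme} (x : X) : WithBot ℕ∞ :=
  ringKrullDim (X.presheaf.stalk x)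

/-! ### Heights, residue fields and transcendence degree -/

/-- A nonzero element of the kernel of `φ` is algebraically independent of any family whose image
under `φ` is algebraically independent: the constant term of an algebraic relation for it would be a
relation between the images. -/
lemma algebraicIndependent_option_of_ker {k B B' ι : Type*} [Field k] [CommRing B] [IsDomain B]
    [CommRing B'] [Algebra k B] [Algebra k B'] (φ : B →ₐ[k] B') (b : ι → B)
    (hb : AlgebraicIndependent k (φ ∘ b)) (x : B) (hx : φ x = 0) (hx0 : x ≠ 0) :
    AlgebraicIndependent k (fun o : Option ι ↦ o.elim x b) := by
  have hb' : AlgebraicIndependent k b := hb.of_comp φ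
  rw [hb'.option_iff_transcendental]
  intro halg
  obtain ⟨r, hr0, hr⟩ := halg.exists_nonzero_dvd (mem_nonZeroDivisors_of_ne_zero hx0)
  obtain ⟨r, hmem⟩ := r
  rw [Algebra.adjoin_range_eq_range_aeval] at hmem
  obtain ⟨p, rfl⟩ := hmem
  have h1 : φ (MvPolynomial.aeval b p) = 0 := by
    obtain ⟨c, hc⟩ := hr
    change MvPolynomial.aeval b p = _ at hc
    rw [hc, map_mul, hx, zero_mul]
  have h2 : MvPolynomial.aeval (φ ∘ b) p = 0 := by
    rw [← h1, MvPolynomial.comp_aeval_apply]; rfl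
  have hp : p = 0 := hb.eq_zero_of_aeval_eq_zero p h2
  subst hp
  exact hr0 (by ext; simp)

/-- If `B` has transcendence degree at most one more than that of a subfamily of `B` which remains
independent modulo `P`, then `P` has height at most one: each step of a chain `⊥ < Q < P` would add an
independent element. -/
lemma height_le_one_of_trdeg_le.{u} {k B κ ι : Type u} [Field k] [CommRing B] [IsDomain B]
    [CommRing κ] [Algebra k B] [Algebra k κ] (φ : B →ₐ[k] κ) [Finite ι] (b : ι → B)
    (hb : AlgebraicIndependent k (φ ∘ b)) (hB : Algebra.trdeg k B ≤ Cardinal.mk ι + 1)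
    (P : Ideal B) [P.IsPrime] (hP : P = RingHom.ker φ) : P.height ≤ 1 := by
  rw [← Nat.cast_one, Ideal.height_le_iff]
  intro Q hQ hlt
  by_cases hQ0 : Q = ⊥
  · subst hQ0; simp
  exfalso
  obtain ⟨q, hq, hq0⟩ := Submodule.exists_mem_ne_zero_of_ne_bot hQ0
  obtain ⟨p, hp, hpQ⟩ := Set.exists_of_ssubset hlt
  let ψ : B ⧸ Q →ₐ[k] κ := Ideal.Quotient.liftₐ Q φ (fun a ha ↦ by
    have := hlt.le ha; rwa [hP] at this)
  have h1 := algebraicIndependent_option_of_ker ψ (fun i ↦ Ideal.Quotient.mkₐ k Q (b i))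
    (by convert! hb using 1) (Ideal.Quotient.mkₐ k Q p)
    (by have hp' : p ∈ P := hp
        rw [hP] at hp'; exact hp')
    (by simpa [Ideal.Quotient.eq_zero_iff_mem] using hpQ)
  have h2 := algebraicIndependent_option_of_ker (Ideal.Quotient.mkₐ k Q)
    (fun o : Option ι ↦ o.elim p b) (by convert! h1 using 1; ext o; cases o <;> rfl) q
    (by simpa [Ideal.Quotient.eq_zero_iff_mem] using hq) hq0
  have h3 := h2.cardinalMk_le_trdeg.trans hB
  have := Fintype.ofFinite ι
  simp only [Cardinal.mk_fintype, Fintype.card_option] at h3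
  norm_cast at h3
  omega

/-- Elements of `R` whose residues are algebraically independent over the residue field of a valuation
ring `𝒪` of `K` are algebraically independent over `K`: divide a relation by a coefficient of
maximal valuation and reduce it. -/
lemma algebraicIndependent_of_residue {K L ι κA κ : Type*} [Field K] [Field L] [Algebra K L]
    (𝒪 : ValuationSubring K) [CommRing κA] [CommRing κ] [Algebra κA κ] [Nontrivial κA]
    {R : Type*} [CommRing R] [Algebra R L] (hinj : Function.Injective (algebraMap R L))
    (i : 𝒪 →+* R) (hi : ∀ a : 𝒪, algebraMap R L (i a) = algebraMap K L a)
    (resA : 𝒪 →+* κA) (res : R →+* κ)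
    (hres : ∀ a, res (i a) = algebraMap κA κ (resA a))
    (b : ι → R) (hb : AlgebraicIndependent κA (res ∘ b)) :
    AlgebraicIndependent K (algebraMap R L ∘ b) := by
  rw [algebraicIndependent_iff]
  intro p hp
  by_contra hp0
  obtain ⟨m, hm, hmax⟩ := p.support.exists_max_image (fun m ↦ 𝒪.valuation (p.coeff m))
    (MvPolynomial.support_nonempty.mpr hp0)
  have hc0 : p.coeff m ≠ 0 := MvPolynomial.mem_support_iff.mp hm
  set c := p.coeff m with hc
  have hmem : ∀ n, p.coeff n / c ∈ 𝒪 := by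
    intro n
    by_cases hn : n ∈ p.support
    · rw [← ValuationSubring.valuation_le_one_iff, map_div₀]
      exact div_le_one_of_le₀ (hmax n hn) zero_le
    · rw [MvPolynomial.notMem_support_iff.mp hn]; simp
  let q : MvPolynomial ι 𝒪 := ∑ n ∈ p.support, MvPolynomial.monomial n ⟨p.coeff n / c, hmem n⟩
  have hq : MvPolynomial.map 𝒪.subtype q = MvPolynomial.C c⁻¹ * p := by
    conv_rhs => rw [p.as_sum, Finset.mul_sum]
    simp only [q, map_sum, MvPolynomial.map_monomial, MvPolynomial.C_mul_monomial]
    refine Finset.sum_congr rfl fun n _ ↦ ?_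
    congr 1
    simp [div_eq_inv_mul]
  have hq1 : MvPolynomial.eval₂ i b q = 0 := by
    apply hinj
    rw [map_zero, MvPolynomial.hom_eval₂]
    have : (algebraMap R L).comp i = (algebraMap K L).comp 𝒪.subtype := by
      ext a; exact hi a
    rw [this, ← MvPolynomial.eval₂_map, hq, MvPolynomial.eval₂_mul]
    have : MvPolynomial.eval₂ (algebraMap K L) (algebraMap R L ∘ b) p = 0 := hp
    change _ * MvPolynomial.eval₂ (algebraMap K L) (algebraMap R L ∘ b) p = 0
    rw [this, mul_zero]
  have hq2 : MvPolynomial.aeval (res ∘ b) (MvPolynomial.map resA q) = 0 := by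
    rw [MvPolynomial.aeval_def, MvPolynomial.eval₂_map]
    have : (algebraMap κA κ).comp resA = res.comp i := by
      ext a; exact (hres a).symm
    rw [this]
    have h := congrArg res hq1
    rw [map_zero, MvPolynomial.hom_eval₂] at h
    exact h
  have hq3 := hb.eq_zero_of_aeval_eq_zero _ hq2
  have hq4 : q.coeff m = 1 := by
    apply Subtype.ext
    have := congrArg (MvPolynomial.coeff m) hq
    rw [MvPolynomial.coeff_map, MvPolynomial.coeff_C_mul, ← hc, inv_mul_cancel₀ hc0] at this
    exact this
  have := congrArg (MvPolynomial.coeff m) hq3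
  rw [MvPolynomial.coeff_map, hq4] at this
  simp at this

/-! ### Transcendence degree of the residue field of a divisorial valuation -/

open scoped IntermediateField.algebraAdjoinAdjoin in
/-- If `b o` generates the maximal ideal of `D_p` and the residue field of `p` is algebraic over the
images of the `b i`, then `k[b] → D` is quasi-finite at `p`. By Zariski's main theorem `D` is then
algebraic over `k[b]`. -/
lemma trdeg_le_of_quasiFinite.{u} {k D σ : Type u} [Field k] [CommRing D] [IsDomain D]
    [Algebra k D] [Algebra.FiniteType k D] (p : Ideal D) [p.IsPrime] [Finite σ] (b : σ → D)
    (o : σ) (ho : IsLocalRing.maximalIdeal (Localization.AtPrime p) =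
      Ideal.span {algebraMap D (Localization.AtPrime p) (b o)})
    (halg : Algebra.IsAlgebraic
      (Algebra.adjoin k (Set.range (algebraMap D p.ResidueField ∘ b))) p.ResidueField) :
    Algebra.trdeg k D ≤ Cardinal.mk σ := by
  let κ := p.ResidueField
  let R₀ := MvPolynomial σ k
  let : Algebra R₀ D := (aeval b).toAlgebra
  have : IsScalarTower k R₀ D := .of_algebraMap_eq' (aeval b).comp_algebraMap.symm
  have : Algebra.FiniteType R₀ D := .of_restrictScalars_finiteType k R₀ D
  have hb : ∀ i, algebraMap R₀ D (X i) = b i := fun i ↦ aeval_X b i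
  have hqf : Algebra.QuasiFinite R₀ κ := by
    let A' := Algebra.adjoin k (Set.range (algebraMap D κ ∘ b))
    have hA' : A' = (aeval (R := k) (algebraMap D κ ∘ b)).range :=
      Algebra.adjoin_range_eq_range_aeval ..
    have hcomp : ∀ x : R₀, algebraMap R₀ κ x = aeval (R := k) (algebraMap D κ ∘ b) x := by
      intro x
      rw [IsScalarTower.algebraMap_apply R₀ D κ]
      change algebraMap D κ (aeval b x) = _
      rw [← IsScalarTower.toAlgHom_apply k D κ, comp_aeval_apply]; rfl
    let g : R₀ →ₐ[k] A' := (aeval (R := k) (algebraMap D κ ∘ b)).codRestrict A'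
      (fun x ↦ by rw [hA']; exact ⟨x, rfl⟩)
    have hg : Function.Surjective g := by
      rintro ⟨x, hx⟩
      rw [hA'] at hx
      obtain ⟨r, hr⟩ := hx
      exact ⟨r, Subtype.ext hr⟩
    let : Algebra R₀ A' := g.toRingHom.toAlgebra
    have : Module.Finite R₀ A' := .of_surjective (Algebra.linearMap R₀ A') hg
    have : IsScalarTower R₀ A' κ := .of_algebraMap_eq fun x ↦ hcomp x
    let F := IntermediateField.adjoin k (Set.range (algebraMap D κ ∘ b))
    have : Algebra.QuasiFinite A' F := inferInstance
    have : Algebra.IsAlgebraic F κ := by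
      refine ⟨fun x ↦ ?_⟩
      have hx := halg.isAlgebraic x
      exact IsAlgebraic.tower_top_of_subalgebra_le (A := A') (B := F.toSubalgebra)
        (IntermediateField.algebra_adjoin_le_adjoin _ _) hx
    have : Algebra.EssFiniteType k κ := by
      have : Algebra.EssFiniteType (D ⧸ p) κ := .of_isLocalization κ (nonZeroDivisors (D ⧸ p))
      exact .comp k (D ⧸ p) κ
    have : Algebra.EssFiniteType F κ := .of_comp k F κ
    have : Module.Finite F κ := by
      obtain ⟨t, ht⟩ := IntermediateField.fg_top F κ
      have := IntermediateField.finiteDimensional_adjoin (K := F) (S := (t : Set κ))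
        fun x _ ↦ (Algebra.IsAlgebraic.isAlgebraic x).isIntegral
      rw [ht] at this
      exact Module.Finite.equiv IntermediateField.topEquiv.toLinearEquiv
    have : Algebra.QuasiFinite A' κ := .trans A' F κ
    exact .trans R₀ A' κ
  have hW : Algebra.WeaklyQuasiFiniteAt R₀ p := by
    rw [Algebra.weaklyQuasiFiniteAt_iff]
    have : (p.under R₀).map (algebraMap R₀ (Localization.AtPrime p)) =
        IsLocalRing.maximalIdeal (Localization.AtPrime p) := by
      apply le_antisymm
      · rw [Ideal.map_le_iff_le_comap]
        intro x hx
        have hx' : algebraMap R₀ D x ∈ p := hx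
        rw [Ideal.mem_comap, IsScalarTower.algebraMap_apply R₀ D]
        exact (IsLocalization.AtPrime.to_map_mem_maximal_iff _ p _).mpr hx'
      · rw [ho, Ideal.span_singleton_le_iff_mem, ← hb, ← IsScalarTower.algebraMap_apply]
        refine Ideal.mem_map_of_mem _ ?_
        change algebraMap R₀ D _ ∈ p
        rw [hb, ← IsLocalization.AtPrime.to_map_mem_maximal_iff (Localization.AtPrime p) p, ho]
        exact Ideal.mem_span_singleton_self _
    rw [this]
    exact hqf
  obtain ⟨r, hr, hri, H⟩ := Algebra.zariskisMainProperty_iff.mp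
    (Algebra.ZariskisMainProperty.of_finiteType_of_weaklyQuasiFiniteAt (R := R₀) p)
  have hr0 : r ≠ 0 := fun h ↦ hr (h ▸ p.zero_mem)
  have hr1 : ∀ x : D, _root_.IsIntegral R₀ x → IsAlgebraic (Algebra.adjoin k (Set.range b)) x := by
    intro x hx
    apply _root_.IsIntegral.isAlgebraic
    have hg : (aeval (R := k) b).range = Algebra.adjoin k (Set.range b) :=
      (Algebra.adjoin_range_eq_range_aeval ..).symm
    let g : R₀ →+* Algebra.adjoin k (Set.range b) := (aeval (R := k) b).toRingHom.codRestrict _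
      fun x ↦ by rw [← hg]; exact ⟨x, rfl⟩
    let : Algebra R₀ (Algebra.adjoin k (Set.range b)) := g.toAlgebra
    have : IsScalarTower R₀ (Algebra.adjoin k (Set.range b)) D := .of_algebraMap_eq fun _ ↦ rfl
    exact hx.tower_top
  have : Algebra.IsAlgebraic (Algebra.adjoin k (Set.range b)) D := by
    refine ⟨fun x ↦ ?_⟩
    obtain ⟨m, hm⟩ := H x
    exact (hr1 _ (hri.pow m)).of_mul (mem_nonZeroDivisors_of_ne_zero (pow_ne_zero m hr0)) (hr1 _ hm)
  exact (Algebra.IsAlgebraic.trdeg_le_cardinalMk k (Set.range b)).trans Cardinal.mk_range_le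

/-- The transcendence degree of an affine domain exceeds that of the residue field at a prime with
discrete valuation ring as localization by at most one. -/
lemma trdeg_le_residueField_add_one.{u} {k D : Type u} [Field k] [CommRing D] [IsDomain D]
    [Algebra k D] [Algebra.FiniteType k D] (p : Ideal D) [p.IsPrime]
    [IsDiscreteValuationRing (Localization.AtPrime p)] :
    Algebra.trdeg k p.ResidueField < Cardinal.aleph0 ∧
      Algebra.trdeg k D ≤ Algebra.trdeg k p.ResidueField + 1 := by
  have : Algebra.EssFiniteType k p.ResidueField := by
    have : Algebra.EssFiniteType (D ⧸ p) p.ResidueField :=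
      .of_isLocalization p.ResidueField (nonZeroDivisors (D ⧸ p))
    exact .comp k (D ⧸ p) p.ResidueField
  have hfin : Algebra.trdeg k p.ResidueField < Cardinal.aleph0 :=
    finTrdeg_iff_trdeg.mp inferInstance
  have halg : Algebra.IsAlgebraic (Algebra.adjoin k (Set.range (algebraMap D p.ResidueField)))
      p.ResidueField := by
    refine ⟨fun x ↦ ?_⟩
    obtain ⟨a, b, rfl⟩ := IsLocalization.exists_mk'_eq (nonZeroDivisors (D ⧸ p)) x
    obtain ⟨a, rfl⟩ := Ideal.Quotient.mk_surjective a
    obtain ⟨b, hb⟩ := b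
    obtain ⟨b, rfl⟩ := Ideal.Quotient.mk_surjective b
    rw [IsFractionRing.mk'_eq_div]
    have key : ∀ z : D, IsAlgebraic (Algebra.adjoin k (Set.range (algebraMap D p.ResidueField)))
        (algebraMap (D ⧸ p) p.ResidueField (Ideal.Quotient.mk p z)) := fun z ↦
      isAlgebraic_algebraMap (⟨_, Algebra.subset_adjoin ⟨z, rfl⟩⟩ :
        Algebra.adjoin k (Set.range (algebraMap D p.ResidueField)))
    rw [div_eq_mul_inv]
    exact (key a).mul (key b).inv
  obtain ⟨s, -, hsub, hs⟩ := exists_isTranscendenceBasis_between (R := k) ∅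
    (Set.range (algebraMap D p.ResidueField)) (Set.empty_subset _)
    ((algebraicIndependent_empty_iff ..).mpr (algebraMap k p.ResidueField).injective)
  have hcard := hs.cardinalMk_eq_trdeg
  have : Finite s := Cardinal.lt_aleph0_iff_finite.mp (hcard ▸ hfin)
  refine ⟨hfin, ?_⟩
  choose u hu using fun x : s ↦ hsub x.2
  obtain ⟨ϖ, hϖ⟩ := IsDiscreteValuationRing.exists_irreducible (Localization.AtPrime p)
  obtain ⟨a, c, hac⟩ := IsLocalization.exists_mk'_eq p.primeCompl ϖ
  have hmax : IsLocalRing.maximalIdeal (Localization.AtPrime p) =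
      Ideal.span {algebraMap D (Localization.AtPrime p) a} := by
    rw [hϖ.maximalIdeal_eq, Ideal.span_singleton_eq_span_singleton]
    refine ⟨(IsLocalization.map_units (Localization.AtPrime p) c).unit, ?_⟩
    rw [← hac]; simp
  have := trdeg_le_of_quasiFinite (k := k) p (fun o : Option s ↦ o.elim a u) none hmax ?_
  · rw [← hcard]; simpa using this
  · refine ⟨fun x ↦ ?_⟩
    refine IsAlgebraic.tower_top_of_subalgebra_le (Algebra.adjoin_mono ?_)
      (hs.isAlgebraic.isAlgebraic x)
    rintro _ ⟨y, rfl⟩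
    exact ⟨some y, hu y⟩

/-! ### The centre of the restricted valuation -/

/-- The version of `exists_finset_height_le_one` for the standard localization. -/
lemma exists_finset_height_le_one_aux {k K L D : Type} [Field k] [Field K] [Field L] [CommRing D]
    [IsDomain D] [Algebra k K] [Algebra K L] [Algebra k L] [IsScalarTower k K L] [Algebra k D]
    [Algebra.FiniteType k D] [Algebra D L] [IsScalarTower k D L] [IsFractionRing D L]
    (p : Ideal D) [p.IsPrime] [IsDiscreteValuationRing (Localization.AtPrime p)]
    [Algebra (Localization.AtPrime p) L] [IsScalarTower D (Localization.AtPrime p) L] :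
    ∃ s : Finset K, (∀ x ∈ s, algebraMap K L x ∈ (algebraMap (Localization.AtPrime p) L).range) ∧
      ∀ (B : Type) [CommRing B] [Algebra k B] (ψ : B →ₐ[k] K) (_ : Function.Injective ψ)
        (j : B →+* Localization.AtPrime p)
        (_ : ∀ b, algebraMap (Localization.AtPrime p) L (j b) = algebraMap K L (ψ b))
        (_ : (s : Set K) ⊆ ψ.range),
        ((IsLocalRing.maximalIdeal (Localization.AtPrime p)).comap j).height ≤ 1 := by
  classical
  let R := Localization.AtPrime p
  let κ := IsLocalRing.ResidueField R
  have : IsFractionRing R L := IsFractionRing.isFractionRing_of_isDomain_of_isLocalization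
    p.primeCompl R L
  have : IsScalarTower k R L := .to₁₃₄ k D R L
  have hRinj : Function.Injective (algebraMap R L) := IsFractionRing.injective R L
  let 𝒪L := (ValuationRing.valuation R L).valuationSubring
  have h𝒪L : ∀ x, x ∈ 𝒪L ↔ ∃ r, algebraMap R L r = x := fun x ↦
    ValuationRing.mem_integer_iff R L x
  let 𝒪 := 𝒪L.comap (algebraMap K L)
  have h𝒪 : ∀ x, x ∈ 𝒪 ↔ ∃ r, algebraMap R L r = algebraMap K L x := fun x ↦ h𝒪L _
  choose i₀ hi₀ using fun x : 𝒪 ↦ (h𝒪 x).mp x.2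
  let i : 𝒪 →+* R :=
    { toFun := i₀
      map_one' := hRinj (by simp [hi₀])
      map_mul' := fun x y ↦ hRinj (by simp [hi₀])
      map_zero' := hRinj (by simp [hi₀])
      map_add' := fun x y ↦ hRinj (by simp [hi₀]) }
  have hi : ∀ a : 𝒪, algebraMap R L (i a) = algebraMap K L a := hi₀
  have hloc : IsLocalHom i := by
    refine ⟨fun a ha ↦ ?_⟩
    obtain ⟨b, hb⟩ := ha.exists_right_inv
    have h0 : (a : K) ≠ 0 := by
      intro h
      have : i a = 0 := hRinj (by rw [hi, h]; simp)
      rw [this] at ha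
      exact not_isUnit_zero ha
    have hb' : algebraMap R L b = algebraMap K L (a : K)⁻¹ := by
      have := congrArg (algebraMap R L) hb
      rw [map_mul, hi, map_one] at this
      rw [map_inv₀]
      exact eq_inv_of_mul_eq_one_right this
    exact IsUnit.of_mul_eq_one ⟨(a : K)⁻¹, (h𝒪 _).mpr ⟨b, hb'⟩⟩
      (Subtype.ext (mul_inv_cancel₀ h0))
  let κA := IsLocalRing.ResidueField 𝒪
  let : Algebra κA κ := (IsLocalRing.ResidueField.map i).toAlgebra
  let : Algebra k 𝒪 := ((algebraMap k K).codRestrict 𝒪.toSubring fun c ↦ (h𝒪 _).mpr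
    ⟨algebraMap k R c, by rw [← IsScalarTower.algebraMap_apply, ← IsScalarTower.algebraMap_apply]⟩).toAlgebra
  have hk𝒪 : ∀ c : k, ((algebraMap k 𝒪 c : 𝒪) : K) = algebraMap k K c := fun _ ↦ rfl
  have hik : ∀ c : k, i (algebraMap k 𝒪 c) = algebraMap k R c := fun c ↦ hRinj (by
    rw [hi, hk𝒪, ← IsScalarTower.algebraMap_apply, ← IsScalarTower.algebraMap_apply])
  have : IsScalarTower k κA κ := .of_algebraMap_eq fun c ↦ by
    change IsLocalRing.residue R (algebraMap k R c) = IsLocalRing.ResidueField.map i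
      (IsLocalRing.residue 𝒪 (algebraMap k 𝒪 c))
    rw [IsLocalRing.ResidueField.map_residue, hik]
  obtain ⟨hκfin, htr1⟩ := trdeg_le_residueField_add_one (k := k) p
  change Algebra.trdeg k κ < _ at hκfin
  change _ ≤ Algebra.trdeg k κ + 1 at htr1
  -- transcendence degrees
  have e1 : Algebra.trdeg k κA + Algebra.trdeg κA κ = Algebra.trdeg k κ := trdeg_add_eq k κA
  have e2 : Algebra.trdeg k K + Algebra.trdeg K L = Algebra.trdeg k L := trdeg_add_eq k K
  have e3 : Algebra.trdeg k D = Algebra.trdeg k L := by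
    have : FaithfulSMul k D := (faithfulSMul_iff_algebraMap_injective k D).mpr
      (algebraMap k D).injective
    rw [← trdeg_add_eq k D (A := L), trdeg_eq_zero_iff.2
      (IsLocalization.isAlgebraic (R := D) L (nonZeroDivisors D)), add_zero]
  have e4 : Algebra.trdeg κA κ ≤ Algebra.trdeg K L := by
    obtain ⟨t, ht⟩ := exists_isTranscendenceBasis κA κ
    rw [← ht.cardinalMk_eq_trdeg]
    choose b hb using fun x : t ↦ IsLocalRing.residue_surjective (R := R) x.1
    refine (algebraicIndependent_of_residue (L := L) 𝒪 hRinj i hi (IsLocalRing.residue 𝒪)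
      (IsLocalRing.residue R) (κA := κA) (κ := κ) (fun a ↦ ?_) b ?_).cardinalMk_le_trdeg
    · exact (IsLocalRing.ResidueField.map_residue i a).symm
    · have : IsLocalRing.residue R ∘ b = ((↑) : t → κ) := funext hb
      rw [this]; exact ht.1
  obtain ⟨t, ht⟩ := exists_isTranscendenceBasis k κA
  have ht1 := ht.cardinalMk_eq_trdeg
  have e5 : Algebra.trdeg k K ≤ Cardinal.mk t + 1 := by
    rw [ht1]
    have hLfin : Algebra.trdeg k L < Cardinal.aleph0 := by
      rw [← e3]; exact trdeg_lt_aleph0_of_finiteType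
    rw [← e2, Cardinal.add_lt_aleph0_iff] at hLfin
    rw [← e1, Cardinal.add_lt_aleph0_iff] at hκfin
    rw [e3, ← e2, ← e1] at htr1
    obtain ⟨⟨a, ha⟩, b, hb⟩ := And.intro (Cardinal.lt_aleph0.mp hLfin.1) (Cardinal.lt_aleph0.mp hLfin.2)
    obtain ⟨⟨c, hc⟩, d, hd⟩ := And.intro (Cardinal.lt_aleph0.mp hκfin.1) (Cardinal.lt_aleph0.mp hκfin.2)
    rw [ha, hb, hc, hd] at htr1
    rw [hb, hd] at e4
    rw [ha, hc]
    norm_cast at *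
    omega
  have htfin : Finite t := by
    rw [← Cardinal.lt_aleph0_iff_finite, ht1]
    rw [← e1, Cardinal.add_lt_aleph0_iff] at hκfin
    exact hκfin.1
  have := Fintype.ofFinite t
  choose a ha using fun x : t ↦ IsLocalRing.residue_surjective (R := 𝒪) x.1
  refine ⟨Finset.univ.image fun x ↦ (a x : K), ?_, ?_⟩
  · simp only [Finset.mem_image, Finset.mem_univ, true_and, forall_exists_index,
      forall_apply_eq_imp_iff]
    exact fun x ↦ ⟨i (a x), hi _⟩
  intro B _ _ ψ hψ j hj hs
  have : IsDomain B := hψ.isDomain ψ.toRingHom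
  choose b hb using fun x : t ↦ (hs (by simp) : (a x : K) ∈ ψ.range)
  have hjk : ∀ c : k, j (algebraMap k B c) = algebraMap k R c := fun c ↦ hRinj (by
    rw [hj, AlgHom.commutes, ← IsScalarTower.algebraMap_apply, ← IsScalarTower.algebraMap_apply])
  have hφk : ∀ c : k, IsLocalRing.residue R (j (algebraMap k B c)) = algebraMap k κ c := fun c ↦ by
    rw [hjk]; rfl
  let φ : B →ₐ[k] κ := { (IsLocalRing.residue R).comp j with commutes' := hφk }
  have hjb : ∀ x, j (b x) = i (a x) := fun x ↦ hRinj (by rw [hj, hi, ← hb]; rfl)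
  refine height_le_one_of_trdeg_le (k := k) (κ := κ) φ b ?_ ?_ _ ?_
  · have h1 : φ ∘ b = (IsScalarTower.toAlgHom k κA κ) ∘ ((↑) : t → κA) := by
      ext x
      change IsLocalRing.residue R (j (b x)) = IsLocalRing.ResidueField.map i x.1
      rw [hjb, ← ha, IsLocalRing.ResidueField.map_residue]
    rw [h1]
    exact ht.1.map' (algebraMap κA κ).injective
  · refine le_trans ?_ e5
    exact trdeg_le_of_injective ψ hψ
  · ext x
    change j x ∈ IsLocalRing.maximalIdeal R ↔ IsLocalRing.residue R (j x) = 0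
    rw [IsLocalRing.residue_eq_zero_iff]

/-- For a divisorial valuation ring `R` of `L` there are finitely many elements of `K ∩ R` such that
the centre of `R` on every subalgebra `B` of `K ∩ R` containing them has height at most one. They are
lifts of a transcendence basis of the residue field of `K ∩ R`. -/
lemma exists_finset_height_le_one {k K L D : Type} [Field k] [Field K] [Field L] [CommRing D]
    [IsDomain D] [Algebra k K] [Algebra K L] [Algebra k L] [IsScalarTower k K L] [Algebra k D]
    [Algebra.FiniteType k D] [Algebra D L] [IsScalarTower k D L] [IsFractionRing D L]
    (p : Ideal D) [p.IsPrime] (R : Type) [CommRing R] [IsDomain R] [IsDiscreteValuationRing R]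
    [Algebra D R] [IsLocalization.AtPrime R p] [Algebra R L] [IsScalarTower D R L] :
    ∃ s : Finset K, (∀ x ∈ s, algebraMap K L x ∈ (algebraMap R L).range) ∧
      ∀ (B : Type) [CommRing B] [Algebra k B] (ψ : B →ₐ[k] K) (_ : Function.Injective ψ)
        (j : B →+* R) (_ : ∀ b, algebraMap R L (j b) = algebraMap K L (ψ b))
        (_ : (s : Set K) ⊆ ψ.range),
        ((IsLocalRing.maximalIdeal R).comap j).height ≤ 1 := by
  let e : R ≃ₐ[D] Localization.AtPrime p :=
    IsLocalization.algEquiv p.primeCompl R (Localization.AtPrime p)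
  let : Algebra (Localization.AtPrime p) L := ((algebraMap R L).comp e.symm.toRingHom).toAlgebra
  have he : ∀ r, algebraMap (Localization.AtPrime p) L (e r) = algebraMap R L r := fun r ↦ by
    change algebraMap R L (e.symm (e r)) = _
    rw [e.symm_apply_apply]
  have : IsScalarTower D (Localization.AtPrime p) L := .of_algebraMap_eq fun d ↦ by
    rw [← e.commutes, he, ← IsScalarTower.algebraMap_apply]
  have : IsDiscreteValuationRing (Localization.AtPrime p) :=
    IsDiscreteValuationRing.RingEquivClass.isDiscreteValuationRing e
  obtain ⟨s, hs, h⟩ := exists_finset_height_le_one_aux (k := k) (K := K) (L := L) p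
  refine ⟨s, fun x hx ↦ ?_, fun B _ _ ψ hψ j hj hsB ↦ ?_⟩
  · obtain ⟨r, hr⟩ := hs x hx
    exact ⟨e.symm r, hr⟩
  · have := h B ψ hψ ((e : R →+* Localization.AtPrime p).comp j) (fun b ↦ by
      rw [← hj]; exact he _) hsB
    convert! this using 1
    rw [← Ideal.comap_comap]
    congr 2
    ext x
    simp only [Ideal.mem_comap, IsLocalRing.mem_maximalIdeal, mem_nonunits_iff]
    exact (not_congr (MulEquiv.isUnit_map e.toRingEquiv)).symm

/-! ### Finiteness of the integral closure of a Rees algebra -/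

/-- Finiteness of normalization, through Noether normalization and separability. -/
lemma isNoetherian_integralClosure_of_finiteType {k T L : Type*} [Field k] [CharZero k]
    [CommRing T] [IsDomain T] [Algebra k T] [Algebra.FiniteType k T] [Field L] [Algebra T L]
    [IsFractionRing T L] : IsNoetherian T (integralClosure T L) := by
  obtain ⟨n, g, hginj, hgfin⟩ := exists_finite_inj_algHom_of_fg k T
  let A := MvPolynomial (Fin n) k
  let : Algebra A T := g.toRingHom.toAlgebra
  have : Module.Finite A T := hgfin
  let : Algebra A L := ((algebraMap T L).comp g.toRingHom).toAlgebra
  have : IsScalarTower A T L := .of_algebraMap_eq' rfl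
  have hAL : Function.Injective (algebraMap A L) :=
    (IsFractionRing.injective T L).comp hginj
  have : FaithfulSMul A L := (faithfulSMul_iff_algebraMap_injective A L).mpr hAL
  let F := FractionRing A
  let : Algebra F L := FractionRing.liftAlgebra A L
  have : IsScalarTower A F L := FractionRing.isScalarTower_liftAlgebra A L
  have : Algebra.QuasiFinite A L := .trans A T L
  have : Algebra.QuasiFinite F L := .of_restrictScalars A F L
  have : Module.Finite F L := .of_quasiFinite
  have : CharZero F := charZero_of_injective_algebraMap (R := k) (algebraMap k F).injective
  have : IsIntegralClosure (integralClosure T L) A L :=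
    { algebraMap_injective := Subtype.val_injective
      isIntegral_iff := fun {x} ↦ ⟨fun hx ↦ ⟨⟨x, hx.tower_top⟩, rfl⟩, by
        rintro ⟨y, rfl⟩
        have : Algebra.IsIntegral A T := inferInstance
        exact isIntegral_trans (A := T) _ y.2⟩ }
  have := IsIntegralClosure.isNoetherian A F L (integralClosure T L)
  exact isNoetherian_of_tower A this

/-- A subalgebra of `K[t]` containing `t` and `x t` for `x ∈ s` has fraction field `K(t)`, if `K` is the
fraction field of `k[s]`. -/
lemma isFractionRing_rees {k K : Type*} [Field k] [Field K] [Algebra k K] (s : Set K)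
    [IsFractionRing (Algebra.adjoin k s) K] (T : Subalgebra k (Polynomial K))
    (hX : Polynomial.X ∈ T) (hs : ∀ x ∈ s, Polynomial.C x * Polynomial.X ∈ T) :
    IsFractionRing T (FractionRing (Polynomial K)) := by
  let L := FractionRing (Polynomial K)
  let ι : Polynomial K →+* L := algebraMap _ _
  have hι : Function.Injective ι := IsFractionRing.injective _ _
  have : FaithfulSMul T L := (faithfulSMul_iff_algebraMap_injective _ _).mpr
    (hι.comp Subtype.val_injective)
  let S : Subring L := T.toSubring.map ι
  have hS : ∀ x : L, x ∈ S ↔ ∃ t : T, algebraMap T L t = x := by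
    intro x
    constructor
    · rintro ⟨t, ht, rfl⟩; exact ⟨⟨t, ht⟩, rfl⟩
    · rintro ⟨t, rfl⟩; exact ⟨t.1, t.2, rfl⟩
  let E := Subfield.closure (S : Set L)
  have hSE : ∀ t ∈ T, ι t ∈ E := fun t ht ↦ Subfield.subset_closure ⟨t, ht, rfl⟩
  have hX0 : ι Polynomial.X ≠ 0 := by
    rw [Ne, map_eq_zero_iff ι hι]; exact Polynomial.X_ne_zero
  have h1 : ∀ a ∈ Algebra.adjoin k s, ι (Polynomial.C a) ∈ E := by
    intro a ha
    induction ha using Algebra.adjoin_induction with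
    | mem x hx =>
      have := div_mem (hSE _ (hs x hx)) (hSE _ hX)
      rwa [map_mul, mul_div_cancel_right₀ _ hX0] at this
    | algebraMap r => exact hSE _ (T.algebraMap_mem r)
    | add x y _ _ hx hy => rw [map_add, map_add]; exact add_mem hx hy
    | mul x y _ _ hx hy => rw [map_mul, map_mul]; exact mul_mem hx hy
  have h2 : ∀ a : K, ι (Polynomial.C a) ∈ E := by
    intro a
    obtain ⟨x, y, hy, rfl⟩ := IsFractionRing.div_surjective (A := Algebra.adjoin k s) a
    change (ι.comp Polynomial.C) _ ∈ E
    rw [map_div₀]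
    exact div_mem (h1 _ x.2) (h1 _ y.2)
  have h3 : ∀ f : Polynomial K, ι f ∈ E := by
    intro f
    induction f using Polynomial.induction_on' with
    | add p q hp hq => rw [map_add]; exact add_mem hp hq
    | monomial n a =>
      rw [← Polynomial.C_mul_X_pow_eq_monomial, map_mul, map_pow]
      exact mul_mem (h2 a) (pow_mem (hSE _ hX) n)
  refine IsFractionRing.of_field T L fun z ↦ ?_
  have hz : z ∈ E := by
    obtain ⟨x, y, hy, rfl⟩ := IsFractionRing.div_surjective (A := Polynomial K) z
    exact div_mem (h3 _) (h3 _)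
  rw [Subfield.mem_closure_iff] at hz
  obtain ⟨x, hx, y, hy, rfl⟩ := hz
  rw [Subring.closure_eq, hS] at hx hy
  obtain ⟨x, rfl⟩ := hx
  obtain ⟨y, rfl⟩ := hy
  exact ⟨x, y, rfl⟩

/-- The Rees algebra `k[t, x t : x ∈ s]` inside `K[t]`: the homogeneous coordinate ring of the closure
of the point `(1 : x)_{x ∈ s}` of projective space. -/
def reesAlg (k : Type*) {K : Type*} [Field k] [Field K] [Algebra k K] (s : Set K) :
    Subalgebra k (Polynomial K) := Algebra.adjoin k (insert Polynomial.X ((fun x ↦ Polynomial.C x * Polynomial.X) '' s))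

/-- The degree `n` piece of the integral closure of the Rees algebra of `s` in `K[t]`, written as a
subspace of `K` by dropping the factor `t ^ n`. -/
def reesPiece (k : Type*) {K : Type*} [Field k] [Field K] [Algebra k K] (s : Set K) (n : ℕ) :
    Submodule k K where
  carrier := {w | _root_.IsIntegral (reesAlg k s) (Polynomial.C w * Polynomial.X ^ n)}
  add_mem' := fun {a b} ha hb ↦ by
    simp only [Set.mem_ofPred_eq, map_add, add_mul] at *
    exact ha.add hb
  zero_mem' := by simpa using isIntegral_zero
  smul_mem' := fun c x hx ↦ by
    simp only [Set.mem_ofPred_eq, ← Polynomial.smul_C, smul_mul_assoc] at *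
    exact hx.smul c

section
variable {k K : Type*} [Field k] [Field K] [Algebra k K] {s : Set K}

lemma mem_reesPiece {n : ℕ} {w : K} :
    w ∈ reesPiece k s n ↔ _root_.IsIntegral (reesAlg k s) (Polynomial.C w * Polynomial.X ^ n) := Iff.rfl

lemma reesPiece_mul_le (m n : ℕ) : reesPiece k s m * reesPiece k s n ≤ reesPiece k s (m + n) := by
  rw [Submodule.mul_le]
  intro a ha b hb
  rw [mem_reesPiece] at *
  have : Polynomial.C (a * b) * Polynomial.X ^ (m + n) = (Polynomial.C a * Polynomial.X ^ m) * (Polynomial.C b * Polynomial.X ^ n) := by rw [map_mul]; ring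
  rw [this]
  exact ha.mul hb

lemma span_insert_le_reesPiece : Submodule.span k (insert 1 s) ≤ reesPiece k s 1 := by
  rw [Submodule.span_le]
  intro x hx
  change _root_.IsIntegral _ _
  have hmem : Polynomial.C x * Polynomial.X ∈ reesAlg k s := by
    rcases hx with rfl | hx
    · have h : Polynomial.X ∈ reesAlg k s := Algebra.subset_adjoin (Set.mem_insert _ _)
      simpa using h
    · exact Algebra.subset_adjoin (Or.inr ⟨x, hx, rfl⟩)
  simpa using isIntegral_algebraMap (R := reesAlg k s) (A := (Polynomial K)) (x := ⟨_, hmem⟩)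

lemma one_le_reesPiece_zero : (1 : Submodule k K) ≤ reesPiece k s 0 := by
  rw [Submodule.one_le, mem_reesPiece]
  simpa using isIntegral_one

lemma pow_le_reesPiece (n : ℕ) : Submodule.span k (insert 1 s) ^ n ≤ reesPiece k s n := by
  induction n with
  | zero => simpa using one_le_reesPiece_zero
  | succ n ih =>
    rw [pow_succ]
    exact (mul_le_mul' ih span_insert_le_reesPiece).trans (reesPiece_mul_le n 1)

lemma reesPiece_pow_le (d n : ℕ) : reesPiece k s d ^ n ≤ reesPiece k s (d * n) := by
  induction n with
  | zero => simpa using one_le_reesPiece_zero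
  | succ n ih =>
    rw [pow_succ]
    exact (mul_le_mul' ih le_rfl).trans (reesPiece_mul_le _ _)

lemma coeff_mem_of_mem_reesAlg {f : (Polynomial K)} (hf : f ∈ reesAlg k s) (n : ℕ) :
    f.coeff n ∈ Submodule.span k (insert 1 s) ^ n := by
  have h1 : ∀ x ∈ insert 1 s, ∀ n, (Polynomial.C x * Polynomial.X : (Polynomial K)).coeff n ∈
      Submodule.span k (insert 1 s) ^ n := by
    intro x hx n
    rw [Polynomial.coeff_C_mul_X]
    split_ifs with h
    · subst h; rw [pow_one]; exact Submodule.subset_span hx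
    · exact zero_mem _
  induction hf using Algebra.adjoin_induction generalizing n with
  | mem x hx =>
    rcases hx with rfl | ⟨x, hx, rfl⟩
    · simpa using h1 1 (Set.mem_insert _ _) n
    · exact h1 x (Or.inr hx) n
  | algebraMap r =>
    rw [Polynomial.algebraMap_apply, Polynomial.coeff_C]
    split_ifs with h
    · subst h; rw [pow_zero]; exact Submodule.algebraMap_mem r
    · exact zero_mem _
  | add x y _ _ hx hy => rw [Polynomial.coeff_add]; exact add_mem (hx n) (hy n)
  | mul x y _ _ hx hy =>
    rw [Polynomial.coeff_mul]
    refine sum_mem fun p hp ↦ ?_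
    rw [← Finset.HasAntidiagonal.mem_antidiagonal.mp hp, pow_add]
    exact Submodule.mul_mem_mul (hx _) (hy _)

lemma finite_reesAlg (s : Finset K) : Algebra.FiniteType k (reesAlg k (s : Set K)) :=
  .adjoin_of_finite ((s.finite_toSet.image _).insert _)

/-- Finite generation of the integral closure over the Rees algebra: from some degree `d` on, the
pieces are obtained from the degree `d` piece by multiplying with powers of the degree-one part
`⟨1, s⟩`. -/
lemma exists_reesPiece_eq [CharZero k] (s : Finset K) [IsFractionRing (Algebra.adjoin k (s : Set K)) K] :
    ∃ d, 1 ≤ d ∧ (reesPiece k (s : Set K) d).FG ∧ ∀ n, d ≤ n →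
      reesPiece k (s : Set K) n ≤
        Submodule.span k (insert 1 (s : Set K)) ^ (n - d) * reesPiece k (s : Set K) d := by
  classical
  let T := reesAlg k (s : Set K)
  let V := Submodule.span k (insert 1 (s : Set K))
  have : Algebra.FiniteType k T := finite_reesAlg s
  let L := FractionRing (Polynomial K)
  have : IsFractionRing T L := isFractionRing_rees (s : Set K) T
    (Algebra.subset_adjoin (Set.mem_insert _ _))
    (fun x hx ↦ Algebra.subset_adjoin (Or.inr ⟨x, hx, rfl⟩))
  have : IsNoetherian T (integralClosure T L) := isNoetherian_integralClosure_of_finiteType (k := k)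
  have hnoeth : IsNoetherian T (integralClosure T (Polynomial K)) := by
    let f : integralClosure T (Polynomial K) →ₗ[T] integralClosure T L :=
      LinearMap.codRestrict (Subalgebra.toSubmodule (integralClosure T L))
        ((IsScalarTower.toAlgHom T (Polynomial K) L).toLinearMap.comp
          (Subalgebra.toSubmodule (integralClosure T (Polynomial K))).subtype)
        (fun x ↦ _root_.IsIntegral.map (IsScalarTower.toAlgHom T (Polynomial K) L) x.2)
    refine isNoetherian_of_injective f ?_
    intro x y hxy
    exact Subtype.ext (IsFractionRing.injective (Polynomial K) L (congrArg Subtype.val hxy))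
  let gens : Set (Polynomial K) := {f | ∃ n, ∃ w ∈ reesPiece k (s : Set K) n, f = Polynomial.C w * Polynomial.X ^ n}
  have hG : (Submodule.span T gens).FG := by
    have hle : Submodule.span T gens ≤ Subalgebra.toSubmodule (integralClosure T (Polynomial K)) := by
      rw [Submodule.span_le]
      rintro _ ⟨n, w, hw, rfl⟩
      exact hw
    have : IsNoetherian T (Submodule.span T gens) :=
      isNoetherian_of_injective (Submodule.inclusion hle) (Submodule.inclusion_injective hle)
    exact Module.Finite.iff_fg.mp inferInstance
  rw [Submodule.fg_span_iff_fg_span_finset_subset] at hG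
  obtain ⟨G, hGsub, hG⟩ := hG
  have hGsub' : ∀ g ∈ G, ∃ n w, w ∈ reesPiece k (s : Set K) n ∧ g = Polynomial.C w * Polynomial.X ^ n := by
    intro g hg
    obtain ⟨n, w, hw, h⟩ := hGsub hg
    exact ⟨n, w, hw, h⟩
  choose! ν ω hω hGeq using hGsub'
  let d := G.sup ν + 1
  have hd : ∀ g ∈ G, ν g ≤ d := fun g hg ↦ (Finset.le_sup hg).trans (Nat.le_succ _)
  have key : ∀ n w, w ∈ reesPiece k (s : Set K) n → d ≤ n →
      ∃ c : (Polynomial K) → K, (∀ g ∈ G, c g ∈ V ^ (n - ν g)) ∧ w = ∑ g ∈ G, c g * ω g := by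
    intro n w hw hn
    have hmem : Polynomial.C w * Polynomial.X ^ n ∈ Submodule.span T gens := Submodule.subset_span ⟨n, w, hw, rfl⟩
    rw [hG, Submodule.mem_span_finset] at hmem
    obtain ⟨τ, -, hτ⟩ := hmem
    refine ⟨fun g ↦ (τ g : (Polynomial K)).coeff (n - ν g), fun g _ ↦ coeff_mem_of_mem_reesAlg (τ g).2 _, ?_⟩
    have := congrArg (fun f ↦ f.coeff n) hτ
    simp only [Polynomial.coeff_C_mul, Polynomial.coeff_X_pow, if_true, mul_one, Polynomial.finsetSum_coeff] at this
    rw [← this]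
    refine Finset.sum_congr rfl fun g hg ↦ ?_
    have hg' : τ g • g = τ g • (Polynomial.C (ω g) * Polynomial.X ^ ν g) :=
      congrArg _ (hGeq g hg)
    rw [hg', Subalgebra.smul_def, smul_eq_mul, mul_left_comm, Polynomial.coeff_C_mul, Polynomial.coeff_mul_X_pow',
      if_pos ((hd g hg).trans hn), mul_comm]
  refine ⟨d, Nat.le_add_left _ _, ?_, ?_⟩
  · have hV : V.FG := Submodule.fg_span (s.finite_toSet.insert _)
    have hfg : (⨆ g ∈ G, V ^ (d - ν g) * Submodule.span k {ω g}).FG :=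
      Submodule.fg_biSup _ _ fun g _ ↦ (hV.pow _).mul (Submodule.fg_span_singleton _)
    have hle : reesPiece k (s : Set K) d ≤ ⨆ g ∈ G, V ^ (d - ν g) * Submodule.span k {ω g} := by
      intro w hw
      obtain ⟨c, hc, rfl⟩ := key d w hw le_rfl
      refine sum_mem fun g hg ↦ ?_
      exact Submodule.mem_iSup_of_mem g (Submodule.mem_iSup_of_mem hg
        (Submodule.mul_mem_mul (hc g hg) (Submodule.mem_span_singleton_self _)))
    exact hfg.of_le hle
  · intro n hn w hw
    obtain ⟨c, hc, rfl⟩ := key n w hw hn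
    refine sum_mem fun g hg ↦ ?_
    have h1 : n - ν g = (n - d) + (d - ν g) := by have := hd g hg; omega
    have h2 := Submodule.mul_mem_mul (hc g hg) (Submodule.mem_span_singleton_self (R := k) (ω g))
    rw [h1, pow_add, mul_assoc] at h2
    suffices h3 : V ^ (d - ν g) * Submodule.span k {ω g} ≤ reesPiece k (s : Set K) d from
      SetLike.le_def.mp (mul_le_mul' le_rfl h3) h2
    calc _ ≤ reesPiece k (s : Set K) (d - ν g) * reesPiece k (s : Set K) (ν g) :=
          mul_le_mul' (pow_le_reesPiece _) ((Submodule.span_singleton_le_iff_mem _ _).mpr (hω g hg))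
      _ ≤ _ := by
        refine (reesPiece_mul_le _ _).trans (le_of_eq ?_)
        congr 1; have := hd g hg; omega
end

/-! ### Projective coordinates with integrally closed charts -/

section
variable {k K : Type*} [Field k] [Field K] [Algebra k K] {s : Set K}

/-- Together with `reesPiece_pow_le`: the `d`-th Veronese subalgebra of the integral closure is generated
in degree one. -/
lemma reesPiece_le_pow {d n : ℕ} (hn : 1 ≤ n)
    (h : ∀ n, d ≤ n → reesPiece k s n ≤
      Submodule.span k (insert 1 s) ^ (n - d) * reesPiece k s d) :
    reesPiece k s (d * n) ≤ reesPiece k s d ^ n := by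
  obtain ⟨n, rfl⟩ : ∃ m, n = m + 1 := ⟨n - 1, by omega⟩
  refine (h _ (Nat.le_mul_of_pos_right d (by omega))).trans ?_
  have : d * (n + 1) - d = d * n := by rw [mul_add, mul_one, Nat.add_sub_cancel]
  rw [this, pow_mul, pow_succ]
  exact mul_le_mul' (pow_le_pow_left' (pow_le_reesPiece d) n) le_rfl

lemma pow_mem_reesPiece {d : ℕ} {z : K} (hz : z ∈ reesPiece k s d) (n : ℕ) :
    z ^ n ∈ reesPiece k s (d * n) :=
  reesPiece_pow_le d n (Submodule.pow_mem_pow _ hz n)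

lemma mul_pow_mem_reesPiece {d m n : ℕ} {b z : K} (hz : z ∈ reesPiece k s d) (hmn : m ≤ n)
    (hb : b * z ^ m ∈ reesPiece k s (d * m)) : b * z ^ n ∈ reesPiece k s (d * n) := by
  obtain ⟨l, rfl⟩ := Nat.exists_eq_add_of_le hmn
  rw [pow_add, mul_add, ← mul_assoc]
  exact reesPiece_mul_le _ _ (Submodule.mul_mem_mul hb (pow_mem_reesPiece hz l))

/-- An element of the chart `k[P / z]` becomes homogeneous after clearing a power of `z`. -/
lemma exists_mul_pow_mem_reesPiece {d : ℕ} {P : Set K} (hP : P ⊆ reesPiece k s d)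
    {z : K} (hz : z ∈ P) (hz0 : z ≠ 0) {b : K} (hb : b ∈ Algebra.adjoin k ((· / z) '' P)) :
    ∃ m, b * z ^ m ∈ reesPiece k s (d * m) := by
  induction hb using Algebra.adjoin_induction with
  | mem x hx =>
    obtain ⟨x, hx, rfl⟩ := hx
    refine ⟨1, ?_⟩
    simpa [div_mul_cancel₀ _ hz0] using hP hx
  | algebraMap r =>
    refine ⟨0, ?_⟩
    simpa using one_le_reesPiece_zero (Submodule.algebraMap_mem r)
  | add x y _ _ hx hy =>
    obtain ⟨m, hm⟩ := hx
    obtain ⟨n, hn⟩ := hy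
    refine ⟨m + n, ?_⟩
    rw [add_mul]
    exact add_mem (mul_pow_mem_reesPiece (hP hz) (by omega) hm)
      (mul_pow_mem_reesPiece (hP hz) (by omega) hn)
  | mul x y _ _ hx hy =>
    obtain ⟨m, hm⟩ := hx
    obtain ⟨n, hn⟩ := hy
    refine ⟨m + n, ?_⟩
    rw [pow_add, mul_mul_mul_comm, mul_add]
    exact reesPiece_mul_le _ _ (Submodule.mul_mem_mul hm hn)

lemma div_pow_mem_adjoin {P : Set K} {z : K} (m : ℕ) {u : K} (hu : u ∈ Submodule.span k P ^ m) :
    u / z ^ m ∈ Algebra.adjoin k ((· / z) '' P) := by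
  have h1 : ∀ u ∈ Submodule.span k P, u / z ∈ Algebra.adjoin k ((· / z) '' P) := by
    intro u hu
    induction hu using Submodule.span_induction with
    | mem x hx => exact Algebra.subset_adjoin ⟨x, hx, rfl⟩
    | zero => simp
    | add x y _ _ hx hy => rw [add_div]; exact add_mem hx hy
    | smul c x _ hx => rw [smul_div_assoc]; exact Subalgebra.smul_mem _ hx c
  induction m generalizing u with
  | zero =>
    rw [pow_zero] at hu
    obtain ⟨r, rfl⟩ := Submodule.mem_one.mp hu
    simp
  | succ m ih =>
    rw [pow_succ] at hu
    induction hu using Submodule.mul_induction_on' with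
    | mem_mul_mem a ha b hb =>
      rw [pow_succ, mul_div_mul_comm]
      exact mul_mem (ih ha) (h1 b hb)
    | add x _ y _ hx hy => rw [add_div]; exact add_mem hx hy

/-- An element integral over the chart `k[P / z]` becomes, after multiplication by a power of `z`, an
element of the integrally closed graded algebra. The relation for `w` is homogenized by scaling its
lower coefficients with powers of `z ^ m`. -/
lemma exists_mul_pow_mem_of_isIntegral {d : ℕ} {P : Set K} (hP : P ⊆ reesPiece k s d)
    {z : K} (hz : z ∈ P) (hz0 : z ≠ 0) {w : K}
    (hw : _root_.IsIntegral (Algebra.adjoin k ((· / z) '' P)) w) :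
    ∃ m, 1 ≤ m ∧ w * z ^ m ∈ reesPiece k s (d * m) := by
  obtain ⟨p, hp, hpw⟩ := hw
  have hex : ∀ j, ∃ m, (p.coeff j : K) * z ^ m ∈ reesPiece k s (d * m) := fun j ↦
    exists_mul_pow_mem_reesPiece hP hz hz0 (p.coeff j).2
  choose μ hμ using hex
  let n := p.natDegree
  let m := (Finset.range n).sup μ + 1
  have hm : ∀ j < n, (p.coeff j : K) * z ^ (m * (n - j)) ∈ reesPiece k s (d * (m * (n - j))) := by
    intro j hj
    refine mul_pow_mem_reesPiece (hP hz) ?_ (hμ j)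
    have h1 : μ j ≤ m := (Finset.le_sup (Finset.mem_range.mpr hj)).trans (Nat.le_succ _)
    exact h1.trans (Nat.le_mul_of_pos_right _ (by omega))
  refine ⟨m, Nat.le_add_left _ _, ?_⟩
  rw [mem_reesPiece]
  set T := reesAlg k s
  let J := integralClosure T (Polynomial K)
  suffices h : _root_.IsIntegral J (Polynomial.C (w * z ^ m) * Polynomial.X ^ (d * m)) from
    isIntegral_trans (R := T) (A := J) _ h
  let a : ℕ → J := fun j ↦ if hj : j < n then
    ⟨Polynomial.C ((p.coeff j : K) * z ^ (m * (n - j))) * Polynomial.X ^ (d * (m * (n - j))),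
      hm j hj⟩ else 0
  refine ⟨Polynomial.X ^ n + ∑ j ∈ Finset.range n, Polynomial.C (a j) * Polynomial.X ^ j, ?_, ?_⟩
  · refine Polynomial.monic_X_pow_add ?_
    refine (Polynomial.degree_sum_le _ _).trans_lt ?_
    refine (Finset.sup_lt_iff (WithBot.bot_lt_coe n)).mpr fun j hj ↦ ?_
    refine (Polynomial.degree_C_mul_X_pow_le _ _).trans_lt ?_
    exact WithBot.coe_lt_coe.mpr (Finset.mem_range.mp hj)
  · have hpw' : w ^ n + ∑ j ∈ Finset.range n, (p.coeff j : K) * w ^ j = 0 := by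
      rw [hp.as_sum] at hpw
      simpa [Polynomial.eval₂_finsetSum] using hpw
    have hterm : ∀ j ∈ Finset.range n, ((a j : J) : Polynomial K) *
        (Polynomial.C (w * z ^ m) * Polynomial.X ^ (d * m)) ^ j =
        Polynomial.C ((p.coeff j : K) * w ^ j) * (Polynomial.C (z ^ (m * n)) * Polynomial.X ^ (d * m * n)) := by
      intro j hj
      have hj := Finset.mem_range.mp hj
      obtain ⟨i, hi⟩ := Nat.exists_eq_add_of_lt hj
      have hi' : n - j = i + 1 := by omega
      simp only [a, dif_pos hj, hi', map_mul, map_pow]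
      rw [hi]
      ring
    simp only [Polynomial.eval₂_add, Polynomial.eval₂_pow, Polynomial.eval₂_X,
      Polynomial.eval₂_finsetSum, Polynomial.eval₂_mul, Polynomial.eval₂_C]
    have : ∀ j, algebraMap J (Polynomial K) (a j) = (a j : Polynomial K) := fun _ ↦ rfl
    simp only [this]
    rw [Finset.sum_congr rfl hterm, ← Finset.sum_mul, ← map_sum]
    have h0 : (Polynomial.C (w * z ^ m) * Polynomial.X ^ (d * m)) ^ n =
      Polynomial.C (w ^ n) * (Polynomial.C (z ^ (m * n)) * Polynomial.X ^ (d * m * n)) := by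
      simp only [map_mul, map_pow]; ring
    rw [h0, ← add_mul, ← map_add, hpw', map_zero, zero_mul]

/-- Setting `t = 1` turns integrality over the Rees algebra into integrality over `k[s]`. -/
lemma isIntegral_of_mem_reesPiece {d : ℕ} {w : K} (hw : w ∈ reesPiece k s d) :
    _root_.IsIntegral (Algebra.adjoin k s) w := by
  let ev : Polynomial K →ₐ[k] K := (Polynomial.aeval (R := K) (1 : K)).restrictScalars k
  have hev : ∀ t ∈ reesAlg k s, ev t ∈ Algebra.adjoin k s := by
    intro t ht
    induction ht using Algebra.adjoin_induction with
    | mem x hx =>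
      rcases hx with rfl | ⟨x, hx, rfl⟩
      · simp [ev, one_mem]
      · simpa [ev] using Algebra.subset_adjoin hx
    | algebraMap r => rw [AlgHom.commutes]; exact Subalgebra.algebraMap_mem _ r
    | add x y _ _ hx hy => rw [map_add]; exact add_mem hx hy
    | mul x y _ _ hx hy => rw [map_mul]; exact mul_mem hx hy
  let φ : reesAlg k s →ₐ[k] Algebra.adjoin k s :=
    (ev.comp (reesAlg k s).val).codRestrict _ fun t ↦ hev t t.2
  have := _root_.IsIntegral.map_of_comp_eq φ.toRingHom ev.toRingHom rfl hw
  simpa [ev] using this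

/-- The normalization of the projective closure of `Spec k[s]`, embedded in projective space: the
coordinates `z` have integrally closed charts, and the chart `k[z]` lies between `k[s]` and its
integral closure. -/
theorem exists_normal_projective_coordinates [CharZero k] (s : Finset K)
    [IsFractionRing (Algebra.adjoin k (s : Set K)) K] :
    ∃ (N : ℕ) (z : Fin (N + 1) → K), z 0 = 1 ∧ (∀ i, z i ≠ 0) ∧
      (∀ i w, _root_.IsIntegral (Algebra.adjoin k (Set.range fun j ↦ z j / z i)) w →
        w ∈ Algebra.adjoin k (Set.range fun j ↦ z j / z i)) ∧
      (∀ x ∈ s, x ∈ Algebra.adjoin k (Set.range z)) ∧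
      ∀ j, _root_.IsIntegral (Algebra.adjoin k (s : Set K)) (z j) := by
  classical
  obtain ⟨d, hd, ⟨t, ht⟩, hle⟩ := exists_reesPiece_eq (k := k) s
  let e := (t.erase 0).equivFin.symm
  let z : Fin ((t.erase 0).card + 1) → K := Fin.cons 1 fun i ↦ (e i : K)
  have hrange : Set.range z = insert 1 ((t : Set K) \ {0}) := by
    rw [Fin.range_cons]
    congr 1
    have : (fun i ↦ (e i : K)) = Subtype.val ∘ e := rfl
    rw [this, e.surjective.range_comp, Subtype.range_coe_subtype]
    ext x; simp [and_comm]
  have h1V : (1 : K) ∈ Submodule.span k (insert 1 (s : Set K)) :=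
    Submodule.subset_span (Set.mem_insert _ _)
  have hV : Submodule.span k (insert 1 (s : Set K)) ≤ reesPiece k (s : Set K) d := by
    refine le_trans ?_ (pow_le_reesPiece d)
    intro x hx
    obtain ⟨d, rfl⟩ : ∃ m, d = m + 1 := ⟨d - 1, by omega⟩
    rw [pow_succ]
    simpa using Submodule.mul_mem_mul (Submodule.pow_mem_pow _ h1V d) hx
  have hspan : Submodule.span k (Set.range z) = reesPiece k (s : Set K) d := by
    rw [hrange]
    refine le_antisymm ?_ ?_
    · rw [Submodule.span_le]
      rintro x (rfl | hx)
      · exact hV h1V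
      · rw [← ht]; exact Submodule.subset_span hx.1
    · rw [← ht, ← Submodule.span_sdiff_singleton_zero]
      exact Submodule.span_mono (Set.subset_insert _ _)
  have hP : Set.range z ⊆ reesPiece k (s : Set K) d := by
    rw [← hspan]; exact Submodule.subset_span
  have hz0 : ∀ i, z i ≠ 0 := by
    intro i
    have : z i ∈ Set.range z := ⟨i, rfl⟩
    rw [hrange] at this
    rcases this with h | h
    · rw [h]; exact one_ne_zero
    · exact h.2
  have himage : ∀ i, (Set.range fun j ↦ z j / z i) = (· / z i) '' Set.range z := by
    intro i; rw [← Set.range_comp]; rfl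
  refine ⟨_, z, rfl, hz0, ?_, ?_, fun j ↦ isIntegral_of_mem_reesPiece (hP ⟨j, rfl⟩)⟩
  · intro i w hw
    rw [himage] at hw ⊢
    obtain ⟨m, hm, hmem⟩ := exists_mul_pow_mem_of_isIntegral hP ⟨i, rfl⟩ (hz0 i) hw
    have := div_pow_mem_adjoin (z := z i) m (hspan ▸ reesPiece_le_pow hm hle hmem)
    rwa [mul_div_cancel_right₀ _ (pow_ne_zero _ (hz0 i))] at this
  · intro x hx
    have : x ∈ Submodule.span k (Set.range z) := by
      rw [hspan]; exact hV (Submodule.subset_span (Or.inr hx))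
    exact Algebra.span_le_adjoin _ _ this
end

/-! ### Points of projective space with values in a field -/

section
variable {K : Type} [Field K] [Algebra ℂ K] {N : ℕ}

/-- Evaluation at the point `z` of the degree-zero part of `ℂ[x₀, …, x_N]` localized at `f`, that is, of
the regular functions on the chart `f ≠ 0`. -/
def awayEval (z : Fin (N + 1) → K) (f : MvPolynomial (Fin (N + 1)) ℂ) (hf : aeval z f ≠ 0) :
    HomogeneousLocalization.Away (homogeneousSubmodule (Fin (N + 1)) ℂ) f →+* K :=
  (IsLocalization.Away.lift (S := Localization.Away f) f
    (g := (aeval z : MvPolynomial (Fin (N + 1)) ℂ →ₐ[ℂ] K).toRingHom) (IsUnit.mk0 _ hf)).comp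
    (algebraMap _ (Localization.Away f))

lemma awayEval_mk (z : Fin (N + 1) → K) (f : MvPolynomial (Fin (N + 1)) ℂ) (hf : aeval z f ≠ 0)
    (c : HomogeneousLocalization.NumDenSameDeg (homogeneousSubmodule (Fin (N + 1)) ℂ)
      (Submonoid.powers f)) :
    awayEval z f hf (HomogeneousLocalization.mk c) =
      aeval z (c.num : MvPolynomial (Fin (N + 1)) ℂ) / aeval z (c.den : MvPolynomial (Fin (N + 1)) ℂ) := by
  have hden : aeval z (c.den : MvPolynomial (Fin (N + 1)) ℂ) ≠ 0 := by
    obtain ⟨n, hn⟩ := c.den_mem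
    rw [← hn, map_pow]
    exact pow_ne_zero _ hf
  rw [eq_div_iff hden]
  have h : ∀ p, (IsLocalization.Away.lift (S := Localization.Away f) f
    (g := (aeval z : MvPolynomial (Fin (N + 1)) ℂ →ₐ[ℂ] K).toRingHom) (IsUnit.mk0 _ hf))
      (algebraMap _ _ p) = aeval z p := fun p ↦ IsLocalization.Away.lift_eq f _ p
  rw [← h, ← h]
  simp only [awayEval, RingHom.comp_apply]
  rw [← map_mul]
  congr 1
  rw [HomogeneousLocalization.algebraMap_apply, HomogeneousLocalization.val_mk,
    Localization.mk_eq_mk', IsLocalization.mk'_spec]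

/-- Evaluation is compatible with restriction from the chart of `f` to the chart of `f * g`. -/
lemma awayEval_awayMap (z : Fin (N + 1) → K) {f g x : MvPolynomial (Fin (N + 1)) ℂ} {e : ℕ}
    (hg : g ∈ homogeneousSubmodule (Fin (N + 1)) ℂ e) (hx : x = f * g)
    (hf0 : aeval z f ≠ 0) (hx0 : aeval z x ≠ 0) :
    (awayEval z x hx0).comp (HomogeneousLocalization.awayMap _ hg hx) = awayEval z f hf0 := by
  ext a
  change IsLocalization.Away.lift (S := Localization.Away x) x
    (g := (aeval z : MvPolynomial (Fin (N + 1)) ℂ →ₐ[ℂ] K).toRingHom) (IsUnit.mk0 _ hx0)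
    (HomogeneousLocalization.awayMap _ hg hx a).val =
    IsLocalization.Away.lift (S := Localization.Away f) f
    (g := (aeval z : MvPolynomial (Fin (N + 1)) ℂ →ₐ[ℂ] K).toRingHom) (IsUnit.mk0 _ hf0) a.val
  rw [HomogeneousLocalization.val_awayMap, ← RingHom.comp_apply]
  congr 1
  refine IsLocalization.ringHom_ext (Submonoid.powers f) (RingHom.ext fun p ↦ ?_)
  simp [Localization.awayLift, IsLocalization.Away.lift_eq]

lemma aeval_eq_pow_mul_aeval_div {z : Fin (N + 1) → K} {i : Fin (N + 1)} (hzi : z i ≠ 0) {n : ℕ}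
    {p : MvPolynomial (Fin (N + 1)) ℂ} (hp : p.IsHomogeneous n) :
    aeval z p = z i ^ n * aeval (fun j ↦ z j / z i) p := by
  rw [aeval_def, aeval_def, eval₂_eq', eval₂_eq', Finset.mul_sum]
  refine Finset.sum_congr rfl fun d hd ↦ ?_
  have hn : ∑ j, d j = n := by
    have := hp (mem_support_iff.mp hd)
    rw [Finsupp.weight_apply, Finsupp.sum_fintype _ _ (by simp)] at this
    simpa using this
  simp only [div_pow, Finset.prod_div_distrib, Finset.prod_pow_eq_pow_sum, hn]
  field_simp

/-- The functions on the `i`-th standard chart take at `z` the values `ℂ[z_j / z_i]`. -/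
lemma awayEval_range (z : Fin (N + 1) → K) (i : Fin (N + 1)) (hi : aeval z (X i : MvPolynomial (Fin (N + 1)) ℂ) ≠ 0) :
    Set.range (awayEval z (X i) hi) = Algebra.adjoin ℂ (Set.range fun j ↦ z j / z i) := by
  have hzi : z i ≠ 0 := by simpa using hi
  apply subset_antisymm
  · rintro _ ⟨a, rfl⟩
    obtain ⟨c, rfl⟩ := HomogeneousLocalization.mk_surjective a
    rw [awayEval_mk]
    have hden : aeval (fun j ↦ z j / z i) (c.den : MvPolynomial (Fin (N + 1)) ℂ) = 1 := by
      obtain ⟨n, hn⟩ := c.den_mem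
      rw [← hn, map_pow, aeval_X, div_self hzi, one_pow]
    rw [aeval_eq_pow_mul_aeval_div hzi c.num.2, aeval_eq_pow_mul_aeval_div hzi c.den.2, hden,
      mul_one, mul_div_cancel_left₀ _ (pow_ne_zero _ hzi), Algebra.adjoin_range_eq_range_aeval]
    exact ⟨_, rfl⟩
  · intro w hw
    change w ∈ (awayEval z (X i) hi).range
    induction hw using Algebra.adjoin_induction with
    | mem x hx =>
      obtain ⟨j, rfl⟩ := hx
      refine ⟨HomogeneousLocalization.mk ⟨1, ⟨X j, isHomogeneous_X _ _⟩, ⟨X i, isHomogeneous_X _ _⟩,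
        Submonoid.mem_powers _⟩, ?_⟩
      rw [awayEval_mk]; simp
    | algebraMap r =>
      refine ⟨HomogeneousLocalization.mk ⟨0, ⟨C r, isHomogeneous_C _ _⟩, ⟨1, isHomogeneous_one _ _⟩,
        one_mem _⟩, ?_⟩
      rw [awayEval_mk]; simp
    | add x y _ _ hx hy => exact add_mem hx hy
    | mul x y _ _ hx hy => exact mul_mem hx hy
end

section
variable {K : Type} [Field K] [Algebra ℂ K] {N : ℕ}

lemma aeval_X_ne_zero {z : Fin (N + 1) → K} (hz : ∀ i, z i ≠ 0) (i : Fin (N + 1)) :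
    aeval z (X i : MvPolynomial (Fin (N + 1)) ℂ) ≠ 0 := by
  rw [aeval_X]; exact hz i

lemma X_mem_homogeneousSubmodule (i : Fin (N + 1)) :
    X i ∈ homogeneousSubmodule (Fin (N + 1)) ℂ 1 :=
  (mem_homogeneousSubmodule _ _).mpr (isHomogeneous_X _ _)

lemma isScalarTower_homogeneousSubmodule_zero (N : ℕ) :
    IsScalarTower ℂ ((homogeneousSubmodule (Fin (N+1)) ℂ) 0) (MvPolynomial (Fin (N+1)) ℂ) :=
  ⟨fun a b c ↦ smul_mul_assoc a (b : MvPolynomial (Fin (N+1)) ℂ) c⟩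

/-- The `K`-point of projective space with homogeneous coordinates `z`, all nonzero. It is defined through
the chart `x₀ ≠ 0`; every other standard chart gives the same morphism by `projPoint_eq`. -/
def projPoint (z : Fin (N + 1) → K) (hz : ∀ i, z i ≠ 0) : Spec (.of K) ⟶ ProjSpace N :=
  Spec.map (CommRingCat.ofHom (awayEval z (X 0) (aeval_X_ne_zero hz 0))) ≫
    Proj.awayι (homogeneousSubmodule (Fin (N + 1)) ℂ) (X 0) (X_mem_homogeneousSubmodule _) one_pos

lemma projPoint_eq (z : Fin (N + 1) → K) (hz : ∀ i, z i ≠ 0) (i : Fin (N + 1)) :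
    projPoint z hz = Spec.map (CommRingCat.ofHom (awayEval z (X i) (aeval_X_ne_zero hz i))) ≫
    Proj.awayι (homogeneousSubmodule (Fin (N + 1)) ℂ) (X i) (X_mem_homogeneousSubmodule _) one_pos := by
  have hx0 : aeval z (X 0 * X i : MvPolynomial (Fin (N + 1)) ℂ) ≠ 0 := by
    rw [map_mul]; exact mul_ne_zero (aeval_X_ne_zero hz 0) (aeval_X_ne_zero hz i)
  rw [projPoint, ← awayEval_awayMap z (X_mem_homogeneousSubmodule i) rfl _ hx0,
    ← awayEval_awayMap z (X_mem_homogeneousSubmodule 0) (mul_comm (X 0) (X i)) (aeval_X_ne_zero hz i) hx0,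
    CommRingCat.ofHom_comp, CommRingCat.ofHom_comp, Spec.map_comp, Spec.map_comp, Category.assoc,
    Category.assoc, Proj.SpecMap_awayMap_awayι, Proj.SpecMap_awayMap_awayι]

lemma isIso_SpecMap_algebraMap_zero (N : ℕ) : IsIso (Spec.map (CommRingCat.ofHom
    (algebraMap ℂ ((homogeneousSubmodule (Fin (N+1)) ℂ) 0)))) := by
  have hb : Function.Bijective (algebraMap ℂ ((homogeneousSubmodule (Fin (N+1)) ℂ) 0)) := by
    refine ⟨fun a b h ↦ C_injective _ _ (congrArg Subtype.val h), ?_⟩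
    rintro ⟨p, hp⟩
    obtain ⟨c, rfl⟩ : ∃ c, p = C c :=
      ⟨_, totalDegree_eq_zero_iff_eq_C.mp (Nat.le_zero.mp (IsHomogeneous.totalDegree_le hp))⟩
    exact ⟨c, rfl⟩
  have : IsIso (CommRingCat.ofHom
    (algebraMap ℂ ((homogeneousSubmodule (Fin (N+1)) ℂ) 0))) :=
    (ConcreteCategory.isIso_iff_bijective _).mpr hb
  infer_instance

lemma isProper_projSpaceToSpecC (N : ℕ) : IsProper (projSpaceToSpecC N) := by
  have := isIso_SpecMap_algebraMap_zero N
  have := isScalarTower_homogeneousSubmodule_zero N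
  have : Algebra.FiniteType ((homogeneousSubmodule (Fin (N+1)) ℂ) 0) (MvPolynomial (Fin (N+1)) ℂ) :=
    .of_restrictScalars_finiteType ℂ _ _
  rw [projSpaceToSpecC]
  infer_instance

lemma projPoint_comp (z : Fin (N + 1) → K) (hz : ∀ i, z i ≠ 0) :
    projPoint z hz ≫ projSpaceToSpecC N = Spec.map (CommRingCat.ofHom (algebraMap ℂ K)) := by
  rw [projPoint, projSpaceToSpecC, Category.assoc, Proj.awayι_toSpecZero_assoc, ← Spec.map_comp,
    ← Spec.map_comp, ← CommRingCat.ofHom_comp, ← CommRingCat.ofHom_comp]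
  congr 2
  ext r
  simp only [RingHom.comp_apply, HomogeneousLocalization.fromZeroRingHom]
  change awayEval _ _ _ (HomogeneousLocalization.mk _) = _
  rw [awayEval_mk]
  change aeval z (C r) / aeval z 1 = _
  simp

lemma iSup_basicOpen_X (N : ℕ) : ⨆ i, Proj.basicOpen (homogeneousSubmodule (Fin (N+1)) ℂ) (X i) = ⊤ := by
  have := isScalarTower_homogeneousSubmodule_zero N
  refine Proj.iSup_basicOpen_eq_top' _ _ (fun i ↦ ⟨1, X_mem_homogeneousSubmodule i⟩) ?_
  rw [← top_le_iff]
  intro p _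
  have : p ∈ Algebra.adjoin ℂ (Set.range (X : Fin (N+1) → MvPolynomial (Fin (N+1)) ℂ)) := by
    rw [adjoin_range_X]; trivial
  induction this using Algebra.adjoin_induction with
  | mem x hx => exact Algebra.subset_adjoin hx
  | algebraMap r =>
    rw [IsScalarTower.algebraMap_apply ℂ ((homogeneousSubmodule (Fin (N+1)) ℂ) 0)]
    exact Subalgebra.algebraMap_mem _ _
  | add x y _ _ hx hy => exact add_mem (hx trivial) (hy trivial)
  | mul x y _ _ hx hy => exact mul_mem (hx trivial) (hy trivial)
end

/-! ### Sections on the scheme-theoretic image of a field-valued point -/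

section
variable {K : Type} [Field K] {P : Scheme.{0}} (j : Spec (.of K) ⟶ P) {D : P.Opens}

lemma preimage_toImage (hj : ⊤ ≤ j ⁻¹ᵁ D) : ⊤ ≤ j.toImage ⁻¹ᵁ (j.imageι ⁻¹ᵁ D) := by
  rw [← Scheme.Hom.comp_preimage, j.toImage_imageι]
  exact hj

/-- For a `K`-point `j` of `P` factoring through the open subset `D`, the restriction along
`Spec K → image j` of the sections of the scheme-theoretic image over `D`, with values in `K`. -/
def imageSections (hj : ⊤ ≤ j ⁻¹ᵁ D) : Γ(j.image, j.imageι ⁻¹ᵁ D) ⟶ .of K :=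
  j.toImage.appLE (j.imageι ⁻¹ᵁ D) ⊤ (preimage_toImage j hj) ≫ (Scheme.ΓSpecIso (.of K)).hom

lemma imageSections_injective (hD : IsAffineOpen D) (hj : ⊤ ≤ j ⁻¹ᵁ D) :
    Function.Injective (imageSections j hj).hom := by
  have h1 := j.toImage_app_injective ⟨D, hD⟩
  have h2 : Function.Injective (Scheme.ΓSpecIso (.of K)).hom :=
    ((ConcreteCategory.isIso_iff_bijective _).mp inferInstance).1
  have hT : j.toImage ⁻¹ᵁ (j.imageι ⁻¹ᵁ D) = ⊤ := top_le_iff.mp (preimage_toImage j hj)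
  have h3 : Function.Injective
      ((Spec (.of K)).presheaf.map (homOfLE (preimage_toImage j hj)).op) := by
    have : IsIso (homOfLE (preimage_toImage j hj)) := 
      ⟨homOfLE hT.le, by subsingleton, by subsingleton⟩
    exact ((ConcreteCategory.isIso_iff_bijective _).mp inferInstance).1
  rw [imageSections, Scheme.Hom.appLE, CommRingCat.hom_comp, CommRingCat.hom_comp]
  exact h2.comp (h3.comp h1)

/-- The image is a closed subscheme, so sections of `P` over an affine open set already give all the
values of sections of the image. -/
lemma range_imageSections (hD : IsAffineOpen D) (hj : ⊤ ≤ j ⁻¹ᵁ D) :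
    Set.range (imageSections j hj).hom =
      Set.range (j.appLE D ⊤ hj ≫ (Scheme.ΓSpecIso (.of K)).hom).hom := by
  have h : j.appLE D ⊤ hj ≫ (Scheme.ΓSpecIso (.of K)).hom =
      j.imageι.app D ≫ imageSections j hj := by
    rw [imageSections, Scheme.Hom.app_eq_appLE, Scheme.Hom.appLE_comp_appLE_assoc]
    simp only [j.toImage_imageι]
  have hs : Function.Surjective (j.imageι.app D) :=
    j.ker.subschemeι_app_surjective ⟨D, hD⟩
  rw [h, CommRingCat.hom_comp, RingHom.coe_comp]
  exact (hs.range_comp _).symm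

lemma SpecMap_imageSections (hU : IsAffineOpen (j.imageι ⁻¹ᵁ D)) (hj : ⊤ ≤ j ⁻¹ᵁ D) :
    Spec.map (imageSections j hj) ≫ hU.fromSpec = j.toImage := by
  rw [imageSections, Spec.map_comp, Category.assoc,
    IsAffineOpen.SpecMap_appLE_fromSpec _ _ (isAffineOpen_top _), IsAffineOpen.fromSpec_top,
    Scheme.isoSpec_Spec_inv, ← Spec.map_comp_assoc]
  simp

lemma range_appLE_SpecMap_comp {R : CommRingCat.{0}} (φ : R ⟶ .of K) (i : Spec R ⟶ P) [IsOpenImmersion i]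
    (hD : i.opensRange = D) (hj : j = Spec.map φ ≫ i) (h : ⊤ ≤ j ⁻¹ᵁ D) :
    Set.range (j.appLE D ⊤ h ≫ (Scheme.ΓSpecIso (.of K)).hom).hom = Set.range φ.hom := by
  subst hj hD
  have e : ⊤ ≤ i ⁻¹ᵁ i.opensRange := by simp
  have : (Spec.map φ ≫ i).appLE i.opensRange ⊤ h ≫ (Scheme.ΓSpecIso (.of K)).hom =
    (i.appLE i.opensRange ⊤ e ≫ (Scheme.ΓSpecIso R).hom) ≫ φ := by
    rw [← Scheme.Hom.appLE_comp_appLE _ _ _ ⊤ _ e le_top, Category.assoc, Category.assoc]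
    congr 1
    rw [← Scheme.ΓSpecIso_naturality]
    congr 1
  rw [this]
  have hiso : IsIso (i.appLE i.opensRange ⊤ e) := by
    have h4 : i ⁻¹ᵁ i.opensRange = ⊤ := by simp
    have : IsIso (homOfLE e) := ⟨homOfLE h4.le, by subsingleton, by subsingleton⟩
    have : IsIso (i.app i.opensRange) := i.isIso_app _ le_rfl
    rw [Scheme.Hom.appLE]; infer_instance
  have hsurj := ((ConcreteCategory.isIso_iff_bijective
    (i.appLE i.opensRange ⊤ e ≫ (Scheme.ΓSpecIso R).hom)).mp inferInstance).2
  rw [CommRingCat.hom_comp, RingHom.coe_comp]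
  exact hsurj.range_comp _

end

/-! ### The normal projective model -/

/-- A subring of a field `K` that contains every element of `K` integral over it is integrally closed. -/
lemma isIntegrallyClosed_of_injective {A K : Type*} [CommRing A] [IsDomain A] [Field K]
    (ψ : A →+* K) (hψ : Function.Injective ψ)
    (h : ∀ w : K, ψ.IsIntegralElem w → w ∈ ψ.range) : IsIntegrallyClosed A := by
  let F := FractionRing A
  let g : F →+* K := IsFractionRing.lift hψ
  have hg : ∀ a, g (algebraMap A F a) = ψ a := fun a ↦ IsFractionRing.lift_algebraMap hψ a
  rw [isIntegrallyClosed_iff F]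
  rintro x ⟨p, hp, hpx⟩
  have : ψ.IsIntegralElem (g x) := by
    refine ⟨p, hp, ?_⟩
    have h1 : ψ = g.comp (algebraMap A F) := RingHom.ext fun a ↦ (hg a).symm
    rw [h1, ← Polynomial.hom_eval₂, hpx, map_zero]
  obtain ⟨a, ha⟩ := h _ this
  exact ⟨a, g.injective (by rw [hg, ha])⟩

lemma isDomain_and_isIntegrallyClosed_stalk {X : Scheme.{0}} {U : X.Opens} (hU : IsAffineOpen U)
    [IsDomain Γ(X, U)] [IsIntegrallyClosed Γ(X, U)] (x : X) (hx : x ∈ U) :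
    IsDomain (X.presheaf.stalk x) ∧ IsIntegrallyClosed (X.presheaf.stalk x) := by
  let := X.presheaf.algebra_section_stalk ⟨x, hx⟩
  have hloc : IsLocalization.AtPrime (X.presheaf.stalk x) (hU.primeIdealOf ⟨x, hx⟩).asIdeal :=
    hU.isLocalization_stalk ⟨x, hx⟩
  have hle : (hU.primeIdealOf ⟨x, hx⟩).asIdeal.primeCompl ≤ nonZeroDivisors Γ(X, U) :=
    Ideal.primeCompl_le_nonZeroDivisors _
  exact ⟨IsLocalization.isDomain_of_le_nonZeroDivisors _ hle,
    isIntegrallyClosed_of_isLocalization (X.presheaf.stalk x) _ hle⟩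

section
variable {K : Type} [Field K] [Algebra ℂ K] {N : ℕ}

/-- The scheme-theoretic image of the `K`-point with coordinates `z` is a normal projective variety if all
its standard charts `ℂ[z_j / z_i]` are integrally closed. The chart `U` is the one of `z 0 = 1`. -/
theorem exists_normal_projective_model (z : Fin (N + 1) → K) (hz0 : z 0 = 1) (hz : ∀ i, z i ≠ 0)
    (hnorm : ∀ i w, _root_.IsIntegral (Algebra.adjoin ℂ (Set.range fun j ↦ z j / z i)) w →
        w ∈ Algebra.adjoin ℂ (Set.range fun j ↦ z j / z i)) :
    ∃ (S' : Scheme) (sS' : S' ⟶ Spec (.of ℂ)), IsProjectiveVariety S' sS' ∧ IsNormalScheme S' ∧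
      ∃ (U : S'.Opens) (hU : IsAffineOpen U) (ψ : Γ(S', U) ⟶ .of K),
        Function.Injective ψ.hom ∧ Set.range ψ.hom = Algebra.adjoin ℂ (Set.range z) ∧
        Spec.map ψ ≫ hU.fromSpec ≫ sS' = Spec.map (CommRingCat.ofHom (algebraMap ℂ K)) := by
  let j := projPoint z hz
  let D : Fin (N + 1) → (ProjSpace N).Opens :=
    fun i ↦ Proj.basicOpen (homogeneousSubmodule (Fin (N+1)) ℂ) (X i)
  have hD : ∀ i, IsAffineOpen (D i) := fun i ↦
    Proj.isAffineOpen_basicOpen _ _ (X_mem_homogeneousSubmodule i) one_pos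
  have hr : ∀ i, (Proj.awayι (homogeneousSubmodule (Fin (N + 1)) ℂ) (X i)
      (X_mem_homogeneousSubmodule i) one_pos).opensRange = D i := fun i ↦
    Proj.opensRange_awayι _ _ _ _
  have hj : ∀ i, ⊤ ≤ j ⁻¹ᵁ D i := by
    intro i x _
    change j x ∈ D i
    rw [← hr i]
    simp only [j, projPoint_eq z hz i]
    exact ⟨_, rfl⟩
  let U : Fin (N + 1) → j.image.Opens := fun i ↦ j.imageι ⁻¹ᵁ D i
  have hU : ∀ i, IsAffineOpen (U i) := fun i ↦ (hD i).preimage j.imageι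
  let ψ : ∀ i, Γ(j.image, U i) ⟶ .of K := fun i ↦ imageSections j (hj i)
  have hψ : ∀ i, Function.Injective (ψ i).hom := fun i ↦ imageSections_injective j (hD i) (hj i)
  have hrange : ∀ i, Set.range (ψ i).hom = Algebra.adjoin ℂ (Set.range fun j ↦ z j / z i) := by
    intro i
    rw [range_imageSections j (hD i) (hj i),
      range_appLE_SpecMap_comp j _ _ (hr i) (projPoint_eq z hz i) (hj i), ← awayEval_range z i (aeval_X_ne_zero hz i)]
    rfl
  have hdom : ∀ i, IsDomain Γ(j.image, U i) := fun i ↦ (hψ i).isDomain _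
  have hclosed : ∀ i, IsIntegrallyClosed Γ(j.image, U i) := by
    intro i
    refine isIntegrallyClosed_of_injective (ψ i).hom (hψ i) ?_
    rintro w ⟨p, hp, hpw⟩
    rw [← SetLike.mem_coe, RingHom.coe_range, hrange i]
    refine hnorm i w ?_
    let ρ : Γ(j.image, U i) →+* Algebra.adjoin ℂ (Set.range fun j ↦ z j / z i) :=
      (ψ i).hom.codRestrict _ fun a ↦ by
        rw [← SetLike.mem_coe, ← hrange i]; exact ⟨a, rfl⟩
    refine ⟨p.map ρ, hp.map ρ, ?_⟩
    rw [Polynomial.eval₂_map]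
    exact hpw
  have hcover : ∀ x : j.image, ∃ i, x ∈ U i := by
    intro x
    have : j.imageι x ∈ ⨆ i, D i := by rw [iSup_basicOpen_X]; trivial
    obtain ⟨i, hi⟩ := TopologicalSpace.Opens.mem_iSup.mp this
    exact ⟨i, hi⟩
  have hstalk : ∀ x : j.image, IsDomain (j.image.presheaf.stalk x) ∧
      IsIntegrallyClosed (j.image.presheaf.stalk x) := by
    intro x
    obtain ⟨i, hi⟩ := hcover x
    exact isDomain_and_isIntegrallyClosed_stalk (hU i) x hi
  have hred : IsReduced j.image := by
    have : ∀ x : j.image, _root_.IsReduced (j.image.presheaf.stalk x) := fun x ↦ by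
      have := (hstalk x).1
      infer_instance
    exact isReduced_of_isReduced_stalk _
  have hirr : IrreducibleSpace j.image := by
    have h1 := (IrreducibleSpace.isIrreducible_univ (Spec (.of K))).image j.toImage
      j.toImage.continuous.continuousOn
    rw [Set.image_univ] at h1
    have h2 := h1.closure
    rw [j.toImage.denseRange.closure_range] at h2
    exact { isPreirreducible_univ := h2.2, toNonempty := ⟨h2.1.some⟩ }
  have hIntg : IsIntegral j.image := isIntegral_of_irreducibleSpace_of_isReduced _
  have hproper := isProper_projSpaceToSpecC N
  refine ⟨j.image, j.imageι ≫ projSpaceToSpecC N,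
    ⟨hIntg, inferInstance, inferInstance, N, j.imageι, inferInstance, rfl⟩, fun x ↦ (hstalk x).2,
    U 0, hU 0, ψ 0, hψ 0, ?_, ?_⟩
  · rw [hrange 0]; simp [hz0]
  · have := SpecMap_imageSections j (hU 0) (hj 0)
    rw [← projPoint_comp z hz, ← Category.assoc]
    change (Spec.map (imageSections j (hj 0)) ≫ _) ≫ _ = _
    rw [this, j.toImage_imageι_assoc]
end

/-! ### Coordinates adapted to a discrete valuation ring -/

lemma isFractionRing_adjoin {k K : Type*} [Field k] [Field K] [Algebra k K] (s : Set K)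
    (hs : IntermediateField.adjoin k s = ⊤) : IsFractionRing (Algebra.adjoin k s) K := by
  refine IsFractionRing.of_field _ _ fun x ↦ ?_
  have hx : x ∈ IntermediateField.adjoin k s := by rw [hs]; trivial
  obtain ⟨r, hr, t, ht, rfl⟩ := IntermediateField.mem_adjoin_iff_div.mp hx
  exact ⟨⟨r, hr⟩, ⟨t, ht⟩, rfl⟩

lemma adjoin_eq_top_of_inv {k K : Type*} [Field k] [Field K] [Algebra k K] (t s : Set K)
    (ht : IntermediateField.adjoin k t = ⊤) (h : ∀ x ∈ t, x ∈ s ∨ x⁻¹ ∈ s) :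
    IntermediateField.adjoin k s = ⊤ := by
  rw [eq_top_iff, ← ht, IntermediateField.adjoin_le_iff]
  intro x hx
  rcases h x hx with h | h
  · exact IntermediateField.subset_adjoin k s h
  · exact inv_mem_iff.mp (IntermediateField.subset_adjoin k s h)

/-- Projective coordinates for a model of `K` with integrally closed charts, such that the chart `k[z]`
lies in the valuation ring `R` and the centre of `R` on it has height at most one. Each generator of
`K` is replaced by its inverse if it does not lie in `R`. -/
theorem exists_coordinates {k K L D : Type} [Field k] [CharZero k] [Field K] [Field L] [CommRing D]
    [IsDomain D] [Algebra k K] [Algebra K L] [Algebra k L] [IsScalarTower k K L] [Algebra k D]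
    [Algebra.FiniteType k D] [Algebra D L] [IsScalarTower k D L] [IsFractionRing D L]
    (p : Ideal D) [p.IsPrime] (R : Type) [CommRing R] [IsDomain R] [IsDiscreteValuationRing R]
    [Algebra D R] [IsLocalization.AtPrime R p] [Algebra R L] [IsScalarTower D R L]
    (t : Finset K) (ht : IntermediateField.adjoin k (t : Set K) = ⊤) :
    ∃ (N : ℕ) (z : Fin (N + 1) → K), z 0 = 1 ∧ (∀ i, z i ≠ 0) ∧
      (∀ i w, _root_.IsIntegral (Algebra.adjoin k (Set.range fun j ↦ z j / z i)) w →
        w ∈ Algebra.adjoin k (Set.range fun j ↦ z j / z i)) ∧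
      IntermediateField.adjoin k (Set.range z) = ⊤ ∧
      (∀ x ∈ Algebra.adjoin k (Set.range z), algebraMap K L x ∈ (algebraMap R L).range) ∧
      ∀ (B : Type) [CommRing B] (ψ : B →+* K) (_ : Function.Injective ψ)
        (_ : Set.range ψ = Algebra.adjoin k (Set.range z))
        (j : B →+* R) (_ : ∀ b, algebraMap R L (j b) = algebraMap K L (ψ b)),
        ((IsLocalRing.maximalIdeal R).comap j).height ≤ 1 := by
  classical
  have hRL : IsFractionRing R L :=
    .isFractionRing_of_isDomain_of_isLocalization p.primeCompl R L
  obtain ⟨s, hs, hB⟩ := exists_finset_height_le_one (k := k) (K := K) (L := L) p R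
  have hval : ∀ x : K, algebraMap K L x ∈ (algebraMap R L).range ∨
      algebraMap K L x⁻¹ ∈ (algebraMap R L).range := by
    intro x
    rcases ValuationRing.isInteger_or_isInteger R (algebraMap K L x) with h | h
    · exact .inl h
    · exact .inr (by rw [map_inv₀]; exact h)
  have hu : ∀ x : K, ∃ w : K, algebraMap K L w ∈ (algebraMap R L).range ∧ (x = w ∨ x⁻¹ = w) := by
    intro x
    rcases hval x with h | h
    · exact ⟨x, h, .inl rfl⟩
    · exact ⟨x⁻¹, h, .inr rfl⟩
  choose u hu hu' using hu
  have hk : ∀ c : k, algebraMap K L (algebraMap k K c) ∈ (algebraMap R L).range := by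
    intro c
    refine ⟨algebraMap D R (algebraMap k D c), ?_⟩
    rw [← IsScalarTower.algebraMap_apply D R L, ← IsScalarTower.algebraMap_apply k D L,
      ← IsScalarTower.algebraMap_apply k K L]
  have hadj : ∀ q : Set K, (∀ x ∈ q, algebraMap K L x ∈ (algebraMap R L).range) →
      ∀ x ∈ Algebra.adjoin k q, algebraMap K L x ∈ (algebraMap R L).range := by
    intro q hq x hx
    induction hx using Algebra.adjoin_induction with
    | mem x hx => exact hq x hx
    | algebraMap c => exact hk c
    | add x y _ _ hx hy => rw [map_add]; exact add_mem hx hy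
    | mul x y _ _ hx hy => rw [map_mul]; exact mul_mem hx hy
  let s' : Finset K := t.image u ∪ s
  have hs' : ∀ x ∈ (s' : Set K), algebraMap K L x ∈ (algebraMap R L).range := by
    intro x hx
    rcases Finset.mem_union.mp hx with h | h
    · obtain ⟨y, -, rfl⟩ := Finset.mem_image.mp h
      exact hu y
    · exact hs x h
  have htop : IntermediateField.adjoin k (s' : Set K) = ⊤ := by
    refine adjoin_eq_top_of_inv (t : Set K) _ ht fun x hx ↦ ?_
    have hm : u x ∈ s' := Finset.mem_union_left _ (Finset.mem_image_of_mem u hx)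
    rcases hu' x with h | h
    · left; rw [h]; exact hm
    · right; rw [h]; exact hm
  have := isFractionRing_adjoin _ htop
  obtain ⟨N, z, hz0, hz, hnorm, hsz, hIntg⟩ := exists_normal_projective_coordinates (k := k) s'
  refine ⟨N, z, hz0, hz, hnorm, ?_, ?_, ?_⟩
  · rw [eq_top_iff, ← htop, IntermediateField.adjoin_le_iff]
    intro x hx
    exact IntermediateField.algebra_adjoin_le_adjoin k _ (hsz x hx)
  · refine hadj _ ?_
    rintro _ ⟨i, rfl⟩
    obtain ⟨P, hP, hPz⟩ := hIntg i
    -- the elements of `k[s']` lie in the integrally closed ring `R`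
    let ρ : Algebra.adjoin k (s' : Set K) →+* (algebraMap R L).range :=
      ((algebraMap K L).comp (algebraMap _ K)).codRestrict _ fun a ↦ hadj _ hs' a a.2
    let ε : R ≃+* (algebraMap R L).range :=
      RingEquiv.ofBijective (algebraMap R L).rangeRestrict
        ⟨fun a b h ↦ IsFractionRing.injective R L (congrArg Subtype.val h),
          (algebraMap R L).rangeRestrict_surjective⟩
    have hε : (algebraMap R L).comp (ε.symm.toRingHom.comp ρ) =
        (algebraMap K L).comp (algebraMap _ K) := by
      ext a
      exact congrArg Subtype.val (ε.apply_symm_apply (ρ a))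
    have h2 : _root_.IsIntegral R (algebraMap K L (z i)) := by
      refine ⟨P.map (ε.symm.toRingHom.comp ρ), hP.map _, ?_⟩
      rw [Polynomial.eval₂_map, hε, ← Polynomial.hom_eval₂, hPz, map_zero]
    exact IsIntegrallyClosed.isIntegral_iff.mp h2
  · intro B _ ψ hψ hr j hj
    have hmem : ∀ c : k, algebraMap k K c ∈ ψ.range := by
      intro c
      rw [← SetLike.mem_coe, RingHom.coe_range, hr]
      exact algebraMap_mem _ c
    choose c hc using hmem
    let γ : k →+* B :=
      { toFun := c
        map_one' := hψ (by simp [hc])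
        map_mul' := fun a b ↦ hψ (by simp [hc])
        map_zero' := hψ (by simp [hc])
        map_add' := fun a b ↦ hψ (by simp [hc]) }
    let := γ.toAlgebra
    refine hB B { ψ with commutes' := hc } hψ j hj ?_
    intro x hx
    have : x ∈ Set.range ψ := by
      rw [hr]
      exact hsz x (Finset.mem_union_right _ hx)
    exact this

/-! ### Common localizations and common open subschemes -/

section
variable {k K : Type*} [Field k] [Field K] [Algebra k K]

/-- The localization `E[1 / a]` as a subalgebra of `K`, for `a` a nonzero element of `E`. For `a = 0` it
is all of `K`. -/
def locSubalgebra (E : Subalgebra k K) (a : K) (ha : a ∈ E) : Subalgebra k K where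
  carrier := {x | ∃ n : ℕ, a ^ n * x ∈ E}
  mul_mem' := by
    rintro x y ⟨n, hn⟩ ⟨m, hm⟩
    exact ⟨n + m, by simpa [pow_add, mul_mul_mul_comm] using mul_mem hn hm⟩
  add_mem' := by
    rintro x y ⟨n, hn⟩ ⟨m, hm⟩
    refine ⟨n + m, ?_⟩
    have := add_mem (mul_mem (pow_mem ha m) hn) (mul_mem (pow_mem ha n) hm)
    convert this using 1
    ring
  algebraMap_mem' c := ⟨0, by simp⟩

lemma exists_denominator (E : Subalgebra k K) (hE : ∀ x : K, ∃ a ∈ E, a ≠ 0 ∧ a * x ∈ E)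
    (F : Subalgebra k K) (hF : F.FG) :
    ∃ g, ∃ hg : g ∈ E, g ≠ 0 ∧ F ≤ locSubalgebra E g hg := by
  classical
  obtain ⟨t, rfl⟩ := hF
  choose d hdE hd0 hd using hE
  refine ⟨∏ x ∈ t, d x, prod_mem fun x _ ↦ hdE x, Finset.prod_ne_zero_iff.mpr fun x _ ↦ hd0 x, ?_⟩
  refine Algebra.adjoin_le fun x hx ↦ ⟨1, ?_⟩
  rw [pow_one, ← Finset.prod_erase_mul t d hx, mul_assoc]
  exact mul_mem (prod_mem fun x _ ↦ hdE x) (hd x)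

lemma locSubalgebra_le {E F : Subalgebra k K} {g h : K} (hh : h ∈ F)
    (hEF : E ≤ locSubalgebra F h hh) {n m : ℕ}
    (ha : g ^ (n + 1) * h ∈ E) (hm : h ^ m * g ∈ F) (hb : h ^ (m + 1) * g ∈ F) :
    locSubalgebra E _ ha ≤ locSubalgebra F _ hb := by
  rintro x ⟨r, hr⟩
  obtain ⟨s, hs⟩ := hEF hr
  refine ⟨(n + 1) * r + s, ?_⟩
  have h1 : h ^ (m * (n + 1) * r + n * r) ∈ F := pow_mem hh _
  have h2 := mul_mem (mul_mem h1 (pow_mem hm s)) hs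
  convert h2 using 1
  ring

/-- Two finitely generated algebras with the same fraction field become equal after inverting one
element in each. With `F ⊆ E[1/g]` and `E ⊆ F[1/h]`, the elements `g ^ (n + 1) * h` and
`h ^ (m + 1) * g` serve, for `n` and `m` large enough to clear denominators. -/
lemma exists_common_localization (E F : Subalgebra k K) (hE : E.FG) (hF : F.FG)
    (hE' : ∀ x : K, ∃ a ∈ E, a ≠ 0 ∧ a * x ∈ E) (hF' : ∀ x : K, ∃ a ∈ F, a ≠ 0 ∧ a * x ∈ F) :
    ∃ (a b : K) (ha : a ∈ E) (hb : b ∈ F), a ≠ 0 ∧ b ≠ 0 ∧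
      locSubalgebra E a ha = locSubalgebra F b hb := by
  obtain ⟨g, hg, hg0, hFE⟩ := exists_denominator E hE' F hF
  obtain ⟨h, hh, hh0, hEF⟩ := exists_denominator F hF' E hE
  obtain ⟨n, hn⟩ := hFE hh
  obtain ⟨m, hm⟩ := hEF hg
  have ha : g ^ (n + 1) * h ∈ E := by
    rw [pow_succ', mul_assoc]; exact mul_mem hg hn
  have hb : h ^ (m + 1) * g ∈ F := by
    rw [pow_succ', mul_assoc]; exact mul_mem hh hm
  exact ⟨_, _, ha, hb, mul_ne_zero (pow_ne_zero _ hg0) hh0, mul_ne_zero (pow_ne_zero _ hh0) hg0,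
    le_antisymm (locSubalgebra_le hh hEF ha hm hb) (locSubalgebra_le hg hFE hb hn ha)⟩

lemma isLocalization_away_locSubalgebra {A : Type*} [CommRing A] (ψ : A →+* K)
    (hψ : Function.Injective ψ) (E : Subalgebra k K) (hr : Set.range ψ = E) (a : A)
    (ha : ψ a ∈ E) (ha0 : ψ a ≠ 0) (ρ : A →+* locSubalgebra E (ψ a) ha)
    (hρ : ∀ x, (ρ x : K) = ψ x) :
    letI := ρ.toAlgebra
    IsLocalization.Away a (locSubalgebra E (ψ a) ha) := by
  let := ρ.toAlgebra
  have hinv : (ψ a)⁻¹ ∈ locSubalgebra E (ψ a) ha := ⟨1, by simp [ha0]⟩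
  have hunit : IsUnit (ρ a) :=
    IsUnit.of_mul_eq_one ⟨_, hinv⟩ (Subtype.ext (by simp [hρ, ha0]))
  refine IsLocalization.Away.mk a hunit ?_ ?_
  · rintro ⟨x, n, hn⟩
    rw [← SetLike.mem_coe, ← hr] at hn
    obtain ⟨c, hc⟩ := hn
    refine ⟨n, c, Subtype.ext ?_⟩
    change x * ((ρ a ^ n : locSubalgebra E (ψ a) ha) : K) = (ρ c : K)
    rw [hρ, hc, SubmonoidClass.coe_pow, hρ, mul_comm]
  · intro x y hxy
    refine ⟨0, ?_⟩
    have : x = y := 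
      hψ ((hρ x).symm.trans ((congrArg Subtype.val hxy).trans (hρ y)))
    rw [this]
end

lemma isOpenImmersion_SpecMap_of_away {A Q : CommRingCat.{0}} (ρ : A ⟶ Q) (a : A)
    (h : letI := ρ.hom.toAlgebra; IsLocalization.Away a Q) : IsOpenImmersion (Spec.map ρ) := by
  let := ρ.hom.toAlgebra
  have := IsOpenImmersion.of_isLocalization (R := A) (S := Q) a
  exact this

/-- Schemes `S` and `S'` having affine charts with the same function field `K` contain a common
affine open subscheme, compatible with the given maps from `Spec K`. -/
lemma exists_common_open {K : Type} [Field K] [Algebra ℂ K] {S S' : Scheme.{0}}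
    {U : S.Opens} (hU : IsAffineOpen U) {U' : S'.Opens} (hU' : IsAffineOpen U')
    (ψ : Γ(S, U) ⟶ .of K) (ψ' : Γ(S', U') ⟶ .of K)
    (hψ : Function.Injective ψ.hom) (hψ' : Function.Injective ψ'.hom)
    (E F : Subalgebra ℂ K) (hE : E.FG) (hF : F.FG)
    (hEr : Set.range ψ.hom = E) (hFr : Set.range ψ'.hom = F)
    (hE' : ∀ x : K, ∃ a ∈ E, a ≠ 0 ∧ a * x ∈ E) (hF' : ∀ x : K, ∃ a ∈ F, a ≠ 0 ∧ a * x ∈ F) :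
    ∃ (Q : CommRingCat.{0}) (q : Q ⟶ .of K) (j : Spec Q ⟶ S) (j' : Spec Q ⟶ S'),
      IsOpenImmersion j ∧ IsOpenImmersion j' ∧ Function.Injective q.hom ∧
      Spec.map q ≫ j = Spec.map ψ ≫ hU.fromSpec ∧
      Spec.map q ≫ j' = Spec.map ψ' ≫ hU'.fromSpec := by
  obtain ⟨a, b, ha, hb, ha0, hb0, hQ⟩ := exists_common_localization E F hE hF hE' hF'
  have hE1 : ∀ x, ψ.hom x ∈ E := fun x ↦ by rw [← SetLike.mem_coe, ← hEr]; exact ⟨x, rfl⟩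
  have hF1 : ∀ x, ψ'.hom x ∈ F := fun x ↦ by rw [← SetLike.mem_coe, ← hFr]; exact ⟨x, rfl⟩
  obtain ⟨a, rfl⟩ : a ∈ Set.range ψ.hom := by rw [hEr]; exact ha
  obtain ⟨b, rfl⟩ : b ∈ Set.range ψ'.hom := by rw [hFr]; exact hb
  have key : ∀ {X : Scheme.{0}} {W : X.Opens} (hW : IsAffineOpen W) (χ : Γ(X, W) ⟶ .of K)
      (_ : Function.Injective χ.hom) (G : Subalgebra ℂ K) (_ : Set.range χ.hom = G)
      (hG : ∀ x, χ.hom x ∈ G) (c : Γ(X, W)) (_ : χ.hom c ≠ 0) (P : Subalgebra ℂ K)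
      (_ : P = locSubalgebra G (χ.hom c) (hG c)),
      ∃ i : Spec (.of P) ⟶ X, IsOpenImmersion i ∧
        Spec.map (CommRingCat.ofHom (algebraMap P K)) ≫ i = Spec.map χ ≫ hW.fromSpec := by
    intro X W hW χ hχ G hGr hG c hc P hP
    subst hP
    let ρ : Γ(X, W) →+* locSubalgebra G (χ.hom c) (hG c) :=
      χ.hom.codRestrict _ fun x ↦ ⟨0, by simpa using hG x⟩
    have hloc := isLocalization_away_locSubalgebra χ.hom hχ G hGr c (hG c) hc ρ fun _ ↦ rfl
    have : IsOpenImmersion (Spec.map (CommRingCat.ofHom ρ)) :=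
      isOpenImmersion_SpecMap_of_away (CommRingCat.ofHom ρ) c hloc
    have hi : IsOpenImmersion hW.fromSpec := inferInstance
    refine ⟨Spec.map (CommRingCat.ofHom ρ) ≫ hW.fromSpec, inferInstance, ?_⟩
    rw [← Category.assoc, ← Spec.map_comp]
    rfl
  obtain ⟨j, hj, hj1⟩ := key hU ψ hψ E hEr hE1 a ha0 _ rfl
  obtain ⟨j', hj', hj1'⟩ := key hU' ψ' hψ' F hFr hF1 b hb0 _ hQ
  exact ⟨_, _, j, j', hj, hj', Subtype.val_injective, hj1, hj1'⟩

/-- Morphisms between affine schemes may be compared after a dominant morphism. -/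
lemma hom_Spec_ext_of_injective {Q L A : CommRingCat.{0}} (q : Q ⟶ L)
    (hq : Function.Injective q.hom) (u v : Spec Q ⟶ Spec A)
    (h : Spec.map q ≫ u = Spec.map q ≫ v) : u = v := by
  obtain ⟨u, rfl⟩ := Spec.map_surjective u
  obtain ⟨v, rfl⟩ := Spec.map_surjective v
  rw [← Spec.map_comp, ← Spec.map_comp] at h
  have h' := Spec.map_injective h
  congr 1
  ext x
  exact hq (congrArg (fun w ↦ w.hom x) h')

/-- Morphisms on an open set that agree on the local scheme at `x` agree near `x`. -/
lemma exists_le_homOfLE_comp_eq {Y S' : Scheme.{0}} [IsIntegral Y] (T₀ : Y.Opens) (a b : (T₀ : Scheme) ⟶ S')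
    (x : Y) (hx : x ∈ T₀) (h : T₀.fromSpecStalkOfMem x hx ≫ a = T₀.fromSpecStalkOfMem x hx ≫ b) :
    ∃ (T : Y.Opens) (hT : T ≤ T₀), x ∈ T ∧ Y.homOfLE hT ≫ a = Y.homOfLE hT ≫ b := by
  have : Nonempty T₀ := ⟨⟨x, hx⟩⟩
  obtain ⟨p, rfl⟩ : ∃ p : (T₀ : Scheme), T₀.ι p = x := ⟨⟨x, hx⟩, rfl⟩
  have hs : T₀.toScheme.fromSpecStalk p =
      Spec.map (T₀.ι.stalkMap p) ≫ T₀.fromSpecStalkOfMem (T₀.ι p) hx := by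
    rw [← cancel_mono T₀.ι, Category.assoc, Scheme.Opens.fromSpecStalkOfMem_ι,
      Scheme.SpecMap_stalkMap_fromSpecStalk]
  have h' : T₀.toScheme.fromSpecStalk p ≫ a = T₀.toScheme.fromSpecStalk p ≫ b := by
    rw [hs, Category.assoc, Category.assoc, h]
  have hIntg : IsIntegral (T₀ : Scheme) := inferInstance
  have hgerm : (T₀ : Scheme).IsGermInjective := inferInstance
  have := hgerm p
  obtain ⟨T₁, hT₁, hab⟩ := spread_out_unique_of_isGermInjective' a b h'
  have hle : T₀.ι ''ᵁ T₁ ≤ T₀ := by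
    rintro _ ⟨t, -, rfl⟩
    exact t.2
  refine ⟨T₀.ι ''ᵁ T₁, hle, ⟨p, hT₁, rfl⟩, ?_⟩
  have he : Y.homOfLE hle = (T₀.ι.isoImage T₁).inv ≫ T₁.ι := by
    rw [← cancel_mono T₀.ι, Category.assoc, Scheme.Hom.isoImage_inv_ι, Scheme.homOfLE_ι]
  rw [he, Category.assoc, Category.assoc, hab]

lemma fromSpecStalkOfMem_homOfLE {Y : Scheme.{0}} {T U : Y.Opens} (h : T ≤ U) (x : Y) (hx : x ∈ T) :
    T.fromSpecStalkOfMem x hx ≫ Y.homOfLE h = U.fromSpecStalkOfMem x (h hx) := by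
  rw [← cancel_mono U.ι, Category.assoc, Scheme.homOfLE_ι, Scheme.Opens.fromSpecStalkOfMem_ι,
    Scheme.Opens.fromSpecStalkOfMem_ι]

lemma stalkSpecializes_fromSpecStalkOfMem {Y : Scheme.{0}} {U : Y.Opens} {x y : Y} (h : x ⤳ y)
    (hx : x ∈ U) (hy : y ∈ U) :
    Spec.map (Y.presheaf.stalkSpecializes h) ≫ U.fromSpecStalkOfMem y hy =
      U.fromSpecStalkOfMem x hx := by
  rw [← cancel_mono U.ι, Category.assoc, Scheme.Opens.fromSpecStalkOfMem_ι,
    Scheme.Opens.fromSpecStalkOfMem_ι, Scheme.SpecMap_stalkSpecializes_fromSpecStalk]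

/-- A morphism from a local scheme factors through the local scheme at the image of the closed point. -/
lemma exists_factor_fromSpecStalk {S : Scheme.{0}} {L : CommRingCat.{0}} [IsLocalRing L]
    (l : Spec L ⟶ S) (η : S) (h : l (IsLocalRing.closedPoint L) = η) :
    ∃ κ : S.presheaf.stalk η ⟶ L, Spec.map κ ≫ S.fromSpecStalk η = l := by
  subst h
  exact ⟨_, Scheme.Spec_stalkClosedPointTo_fromSpecStalk l⟩

/-! ### The birational isomorphism and the extension over the given point -/

/-- The image of the closed point under `Spec R → U ⊆ X` has codimension the height of the centre of `R`
on the affine open set `U`. -/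
lemma ptCodim_le_of_height_le {X : Scheme.{0}} {U : X.Opens} (hU : IsAffineOpen U)
    {R : CommRingCat.{0}} [IsLocalRing R] (j : Γ(X, U) ⟶ R)
    (h : ((IsLocalRing.maximalIdeal R).comap j.hom).height ≤ 1) (x : X)
    (hx : (Spec.map j ≫ hU.fromSpec) (IsLocalRing.closedPoint R) = x) : ptCodim x ≤ 1 := by
  let P : Spec Γ(X, U) := Spec.map j (IsLocalRing.closedPoint R)
  have hxP : hU.fromSpec P = x := by rw [← hx]; rfl
  have hxU : x ∈ U := by
    have : x ∈ Set.range hU.fromSpec := ⟨P, hxP⟩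
    rwa [hU.range_fromSpec] at this
  have hP : hU.primeIdealOf ⟨x, hxU⟩ = P :=
    hU.fromSpec.isOpenEmbedding.injective ((hU.fromSpec_primeIdealOf ⟨x, hxU⟩).trans hxP.symm)
  let := X.presheaf.algebra_section_stalk ⟨x, hxU⟩
  have hloc : IsLocalization.AtPrime (X.presheaf.stalk x) (hU.primeIdealOf ⟨x, hxU⟩).asIdeal :=
    hU.isLocalization_stalk ⟨x, hxU⟩
  have hdim := IsLocalization.AtPrime.ringKrullDim_eq_height (hU.primeIdealOf ⟨x, hxU⟩).asIdeal
    (X.presheaf.stalk x)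
  have hPi : (hU.primeIdealOf ⟨x, hxU⟩).asIdeal = (IsLocalRing.maximalIdeal R).comap j.hom := by
    rw [hP]; rfl
  rw [ptCodim, hdim, hPi]
  exact_mod_cast h

lemma fromSpecStalkOfMem_comp_closedPoint {X Z : Scheme.{0}} (U : X.Opens) (x : X) (hx : x ∈ U)
    (f : (U : Scheme) ⟶ Z) :
    (U.fromSpecStalkOfMem x hx ≫ f) (IsLocalRing.closedPoint (X.presheaf.stalk x)) =
      f ⟨x, hx⟩ := by
  have h : (U.fromSpecStalkOfMem x hx) (IsLocalRing.closedPoint (X.presheaf.stalk x)) =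
      ⟨x, hx⟩ := by
    apply U.ι.isOpenEmbedding.injective
    have := congr($(U.fromSpecStalkOfMem_ι x hx) (IsLocalRing.closedPoint (X.presheaf.stalk x)))
    exact this.trans Scheme.fromSpecStalk_closedPoint
  exact congrArg f h

/-- The geometric conclusion from function field data: `κ` is the pullback by the rational map, `ψ` the
chart `U'` of `S'` in the function field of `S`, `Q` a common open subscheme of `S` and `S'`, and `r` the
factorization of the chart through the local ring at `y`. The morphism `Spec 𝒪_y → S'` given by `r`
spreads out to a neighbourhood of `y`. -/
theorem exists_birational_and_extension {Y S S' : Scheme.{0}} [IsIntegral Y] [IsIntegral S]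
    (sY : Y ⟶ Spec (.of ℂ)) (sS : S ⟶ Spec (.of ℂ)) (sS' : S' ⟶ Spec (.of ℂ))
    [LocallyOfFiniteType sS']
    (U : Y.Opens) (hηU : genericPoint Y ∈ U) (fU : (U : Scheme) ⟶ S)
    (hover : fU ≫ sS = U.ι ≫ sY) (y : Y)
    (κ : S.functionField ⟶ Y.functionField)
    (hκ : Spec.map κ ≫ S.fromSpecStalk (genericPoint S) =
      U.fromSpecStalkOfMem (genericPoint Y) hηU ≫ fU)
    {U' : S'.Opens} (hU' : IsAffineOpen U') (ψ : Γ(S', U') ⟶ S.functionField)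
    (hψ : Spec.map ψ ≫ hU'.fromSpec ≫ sS' = S.fromSpecStalk (genericPoint S) ≫ sS)
    (Q : CommRingCat.{0}) (q : Q ⟶ S.functionField) (hq : Function.Injective q.hom)
    (j : Spec Q ⟶ S) (j' : Spec Q ⟶ S') [IsOpenImmersion j] [IsOpenImmersion j']
    (hqj : Spec.map q ≫ j = S.fromSpecStalk (genericPoint S))
    (hqj' : Spec.map q ≫ j' = Spec.map ψ ≫ hU'.fromSpec)
    (r : Γ(S', U') ⟶ Y.presheaf.stalk y)
    (hr : r ≫ Y.presheaf.stalkSpecializes ((genericPoint_spec Y).specializes trivial) = ψ ≫ κ)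
    (hheight : ((IsLocalRing.maximalIdeal (Y.presheaf.stalk y)).comap r.hom).height ≤ 1) :
    ∃ (V : S.Opens) (V' : S'.Opens) (_ : V ≠ ⊥) (_ : V' ≠ ⊥)
        (e : (V : Scheme) ≅ (V' : Scheme)),
        e.hom ≫ V'.ι ≫ sS' = V.ι ≫ sS ∧
        ∃ (W : Y.Opens) (hyW : y ∈ W) (f' : (W : Scheme) ⟶ S'),
          (∃ (T : Y.Opens) (_ : T ≠ ⊥) (hTU : T ≤ U) (hTW : T ≤ W)
            (g : (T : Scheme) ⟶ (V : Scheme)),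
              g ≫ V.ι = Y.homOfLE hTU ≫ fU ∧
              g ≫ e.hom ≫ V'.ι = Y.homOfLE hTW ≫ f') ∧
          ptCodim (f'.base ⟨y, hyW⟩) ≤ 1 := by
  set η := genericPoint Y with hη
  have hsp : η ⤳ y := (genericPoint_spec Y).specializes trivial
  have hσ : Function.Injective (Y.presheaf.stalkSpecializes hsp).hom :=
    IsFractionRing.injective (Y.presheaf.stalk y) Y.functionField
  have hjj : j' ≫ sS' = j ≫ sS := by
    refine hom_Spec_ext_of_injective q hq _ _ ?_
    rw [← Category.assoc, hqj', Category.assoc, hψ, ← Category.assoc, hqj]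
  -- the morphism from the local scheme at `y` to the new model
  have hφ : (Spec.map r ≫ hU'.fromSpec) ≫ sS' = Y.fromSpecStalk y ≫ sY := by
    refine hom_Spec_ext_of_injective (Y.presheaf.stalkSpecializes hsp) hσ _ _ ?_
    rw [Category.assoc, ← Category.assoc, ← Spec.map_comp, hr, Spec.map_comp, Category.assoc, hψ,
      ← Category.assoc, hκ, Category.assoc, hover, ← Category.assoc,
      Scheme.Opens.fromSpecStalkOfMem_ι, ← Category.assoc,
      Scheme.SpecMap_stalkSpecializes_fromSpecStalk]
  have hgermy : Y.IsGermInjective := inferInstance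
  have := hgermy y
  obtain ⟨W, hyW, f', hf', -⟩ := spread_out_of_isGermInjective' sY sS' _ hφ
  have hηW : η ∈ W := hsp.mem_open W.2 hyW
  let e : (j.opensRange : Scheme) ≅ (j'.opensRange : Scheme) :=
    j.isoOpensRange.symm ≪≫ j'.isoOpensRange
  have he : e.hom ≫ j'.opensRange.ι = j.isoOpensRange.inv ≫ j' := by
    simp [e]
  have hpt : ∀ {X : Scheme.{0}} (i : Spec Q ⟶ X) [IsOpenImmersion i], i.opensRange ≠ ⊥ := by
    intro X i _ h
    let x : Spec Q := Spec.map q (IsLocalRing.closedPoint S.functionField)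
    have : i x ∈ i.opensRange := ⟨x, rfl⟩
    rw [h] at this
    exact this
  have hηfU : fU ⟨η, hηU⟩ ∈ j.opensRange := by
    rw [← fromSpecStalkOfMem_comp_closedPoint U η hηU fU, ← hκ, ← hqj, ← Category.assoc]
    exact ⟨_, rfl⟩
  let T₀ : Y.Opens := U.ι ''ᵁ (fU ⁻¹ᵁ j.opensRange) ⊓ W
  have hηT₀ : η ∈ T₀ := ⟨⟨⟨η, hηU⟩, hηfU, rfl⟩, hηW⟩
  have hT₀U : T₀ ≤ U := by
    rintro _ ⟨⟨u, -, rfl⟩, -⟩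
    exact u.2
  have hT₀W : T₀ ≤ W := inf_le_right
  have hrange : Set.range (Y.homOfLE hT₀U ≫ fU) ⊆ Set.range j.opensRange.ι := by
    rintro _ ⟨t, rfl⟩
    obtain ⟨⟨u, hu, hut⟩, -⟩ := t.2
    have h2 : Y.homOfLE hT₀U t = u := by
      apply U.ι.isOpenEmbedding.injective
      rw [← Scheme.Hom.comp_apply, Scheme.homOfLE_ι]
      exact hut.symm
    rw [Scheme.Hom.comp_apply, h2, Scheme.Opens.range_ι]
    exact hu
  let g₀ : (T₀ : Scheme) ⟶ (j.opensRange : Scheme) :=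
    IsOpenImmersion.lift j.opensRange.ι (Y.homOfLE hT₀U ≫ fU) hrange
  have hg₀ : g₀ ≫ j.opensRange.ι = Y.homOfLE hT₀U ≫ fU := IsOpenImmersion.lift_fac _ _ _
  have hLg : T₀.fromSpecStalkOfMem η hηT₀ ≫ g₀ = Spec.map κ ≫ Spec.map q ≫ j.isoOpensRange.hom := by
    rw [← cancel_mono j.opensRange.ι, Category.assoc, hg₀, ← Category.assoc,
      fromSpecStalkOfMem_homOfLE, ← hκ, ← hqj]
    simp
  have h1 : T₀.fromSpecStalkOfMem η hηT₀ ≫ g₀ ≫ e.hom ≫ j'.opensRange.ι =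
      Spec.map κ ≫ Spec.map q ≫ j' := by
    rw [← Category.assoc, hLg, he]
    simp
  have h2 : T₀.fromSpecStalkOfMem η hηT₀ ≫ Y.homOfLE hT₀W ≫ f' =
      Spec.map κ ≫ Spec.map ψ ≫ hU'.fromSpec := by
    rw [← Category.assoc, fromSpecStalkOfMem_homOfLE,
      ← stalkSpecializes_fromSpecStalkOfMem hsp hηW hyW, Category.assoc, ← hf',
      ← Category.assoc, ← Spec.map_comp, hr, Spec.map_comp, Category.assoc]
  obtain ⟨T, hT, hηT, hTeq⟩ := exists_le_homOfLE_comp_eq T₀ (g₀ ≫ e.hom ≫ j'.opensRange.ι)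
    (Y.homOfLE hT₀W ≫ f') η hηT₀ (by rw [h1, h2, hqj'])
  refine ⟨j.opensRange, j'.opensRange, hpt j, hpt j', e, ?_, W, hyW, f',
    ⟨T, ?_, hT.trans hT₀U, hT.trans hT₀W, Y.homOfLE hT ≫ g₀, ?_, ?_⟩, ?_⟩
  · rw [← Category.assoc, he, Category.assoc, hjj, ← Category.assoc, Scheme.Hom.isoOpensRange_inv_comp]
  · rintro rfl
    exact hηT
  · rw [Category.assoc, hg₀, Scheme.homOfLE_homOfLE_assoc]
  · rw [Category.assoc, hTeq, Scheme.homOfLE_homOfLE_assoc]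
  · refine ptCodim_le_of_height_le hU' r hheight _ ?_
    rw [hf']
    exact fromSpecStalkOfMem_comp_closedPoint W y hyW f'

/-! ### Function fields of complex varieties -/

lemma isDiscreteValuationRing_of_ringKrullDim_eq_one (R : Type) [CommRing R] [IsDomain R]
    [IsLocalRing R] [IsNoetherianRing R] [IsIntegrallyClosed R] (h : ringKrullDim R = 1) :
    IsDiscreteValuationRing R := by
  have hf : ¬ IsField R := fun hf ↦ by
    rw [ringKrullDim_eq_zero_of_isField hf] at h
    exact zero_ne_one h
  have : Ring.KrullDimLE 1 R := by
    rw [Ring.krullDimLE_iff, h]; rfl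
  have h03 : IsDiscreteValuationRing R ↔
      IsIntegrallyClosed R ∧ ∃! P : Ideal R, P ≠ ⊥ ∧ P.IsPrime :=
    (IsDiscreteValuationRing.TFAE R hf).out 0 3
  refine h03.mpr
    ⟨inferInstance, IsLocalRing.maximalIdeal R,
      ⟨fun h ↦ hf (IsLocalRing.isField_iff_maximalIdeal_eq.mpr h), inferInstance⟩, fun P hP ↦ ?_⟩
  exact IsLocalRing.eq_maximalIdeal (hP.2.isMaximal_of_ne_bot hP.1)

/-- The `ℂ`-algebra structure of the coordinate ring of an affine open set, and its compatibility with the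
structure morphism at the generic point. -/
lemma exists_sections_structure {X : Scheme.{0}} [IsIntegral X] (sX : X ⟶ Spec (.of ℂ))
    [LocallyOfFiniteType sX] {A : X.Opens} (hA : IsAffineOpen A) [Nonempty A] :
    ∃ γ : .of ℂ ⟶ Γ(X, A), γ.hom.FiniteType ∧
      Spec.map (γ ≫ X.germToFunctionField A) = X.fromSpecStalk (genericPoint X) ≫ sX := by
  refine ⟨Spec.preimage (hA.fromSpec ≫ sX), ?_, ?_⟩
  · have : LocallyOfFiniteType (Spec.map (Spec.preimage (hA.fromSpec ≫ sX))) := by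
      rw [Spec.map_preimage]; infer_instance
    exact (HasRingHomProperty.Spec_iff (P := @LocallyOfFiniteType)).mp this
  · rw [Spec.map_comp, Spec.map_preimage, ← hA.fromSpecStalk_eq_fromSpecStalk,
      IsAffineOpen.fromSpecStalk, Category.assoc]

/-- The coordinate ring of a nonempty affine open set, as a subalgebra of the function field: it is finitely
generated, and every function is a quotient of two of its elements. -/
lemma exists_generators_functionField {X : Scheme.{0}} [IsIntegral X]
    {A : X.Opens} (hA : IsAffineOpen A) [Nonempty A] (γ : .of ℂ ⟶ Γ(X, A))
    (hγ : γ.hom.FiniteType) [Algebra ℂ X.functionField]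
    (hγ' : algebraMap ℂ X.functionField = (γ ≫ X.germToFunctionField A).hom) :
    ∃ t : Finset X.functionField, IntermediateField.adjoin ℂ (t : Set X.functionField) = ⊤ ∧
      Set.range (X.germToFunctionField A).hom = (Algebra.adjoin ℂ (t : Set X.functionField)) ∧
      ∀ x : X.functionField, ∃ a ∈ Algebra.adjoin ℂ (t : Set X.functionField),
        a ≠ 0 ∧ a * x ∈ Algebra.adjoin ℂ (t : Set X.functionField) := by
  classical
  algebraize [γ.hom]
  let φ : Γ(X, A) →ₐ[ℂ] X.functionField :=
    { (X.germToFunctionField A).hom with commutes' := fun c ↦ by rw [hγ']; rfl }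
  obtain ⟨s, hs⟩ := Algebra.FiniteType.out (R := ℂ) (A := Γ(X, A))
  have hr : Algebra.adjoin ℂ ((s.image φ : Finset _) : Set X.functionField) = φ.range := by
    rw [Finset.coe_image, ← AlgHom.map_adjoin, hs, Algebra.map_top]
  have := functionField_isFractionRing_of_isAffineOpen X A hA
  have key : ∀ x : X.functionField,
      ∃ a ∈ Algebra.adjoin ℂ ((s.image φ : Finset _) : Set X.functionField),
        a ≠ 0 ∧ a * x ∈ Algebra.adjoin ℂ ((s.image φ : Finset _) : Set X.functionField) := by
    intro x
    rw [hr]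
    obtain ⟨a, b, hb, rfl⟩ := IsFractionRing.div_surjective (A := Γ(X, A)) x
    have hb' : algebraMap Γ(X, A) X.functionField b ≠ 0 :=
      IsFractionRing.to_map_ne_zero_of_mem_nonZeroDivisors hb
    exact ⟨_, ⟨b, rfl⟩, hb', ⟨a, (mul_div_cancel₀ _ hb').symm⟩⟩
  refine ⟨s.image φ, ?_, ?_, key⟩
  · refine eq_top_iff.mpr fun x _ ↦ ?_
    obtain ⟨a, ha, ha0, hax⟩ := key x
    have hmem := IntermediateField.algebra_adjoin_le_adjoin ℂ
      ((s.image φ : Finset _) : Set X.functionField)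
    have : a * x / a ∈ IntermediateField.adjoin ℂ ((s.image φ : Finset _) : Set X.functionField) :=
      div_mem (hmem hax) (hmem ha)
    rwa [mul_div_cancel_left₀ _ ha0] at this
  · rw [hr]; rfl

/-! ### The theorem -/

/-- **Lemma 5.2 (Schreieder; after Merkurjev).**  Let `f : Y ⇢ S` be a dominant rational
map between normal complex projective varieties (represented by a morphism `fU` on a dense
open subset `U ⊆ Y`), and let `y ∈ Y` be a point of codimension one.  Then there is a
normal projective variety `S'`, birational to `S`, such that the induced rational map
`f' : Y ⇢ S'` is defined at `y` and maps `y` either to the generic point of `S'` or to the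
generic point of a divisor on `S'` (i.e. to a point of codimension at most one). -/
theorem exists_model_where_codim_one_point_maps_to_codim_le_one_point
    (Y S : Scheme) (sY : Y ⟶ Spec (.of ℂ)) (sS : S ⟶ Spec (.of ℂ))
    (hY : IsProjectiveVariety Y sY) (hS : IsProjectiveVariety S sS)
    (hYnormal : IsNormalScheme Y) (hSnormal : IsNormalScheme S)
    (U : Y.Opens) (hU : U ≠ ⊥) (fU : (U : Scheme) ⟶ S)
    (hdom : Dense (Set.range fU.base))
    (hover : fU ≫ sS = U.ι ≫ sY)
    (y : Y) (hy : ptCodim y = 1) :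
    ∃ (S' : Scheme) (sS' : S' ⟶ Spec (.of ℂ)),
      IsProjectiveVariety S' sS' ∧ IsNormalScheme S' ∧
      -- `S'` is birational to `S`, via an isomorphism of dense open subsets over `ℂ`:
      ∃ (V : S.Opens) (V' : S'.Opens) (hV : V ≠ ⊥) (hV' : V' ≠ ⊥)
        (e : (V : Scheme) ≅ (V' : Scheme)),
        e.hom ≫ V'.ι ≫ sS' = V.ι ≫ sS ∧
        -- the induced rational map `f' : Y ⇢ S'` is defined on an open set `W ∋ y` …
        ∃ (W : Y.Opens) (hyW : y ∈ W) (f' : (W : Scheme) ⟶ S'),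
          -- … agrees with `fU` (via `e`) on a dense common open subset …
          (∃ (T : Y.Opens) (hT : T ≠ ⊥) (hTU : T ≤ U) (hTW : T ≤ W)
            (g : (T : Scheme) ⟶ (V : Scheme)),
              g ≫ V.ι = Y.homOfLE hTU ≫ fU ∧
              g ≫ e.hom ≫ V'.ι = Y.homOfLE hTW ≫ f') ∧
          -- … and maps `y` to a point of codimension at most one:
          ptCodim (f'.base ⟨y, hyW⟩) ≤ 1 := by
  obtain ⟨_, _, -, -⟩ := hY
  obtain ⟨_, _, -, -⟩ := hS
  have : IsNoetherianRing (CommRingCat.of ℂ) := inferInstanceAs (IsNoetherianRing ℂ)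
  have : IsLocallyNoetherian Y := LocallyOfFiniteType.isLocallyNoetherian sY
  have : IsIntegrallyClosed (Y.presheaf.stalk y) := hYnormal y
  have : IsDiscreteValuationRing (Y.presheaf.stalk y) :=
    isDiscreteValuationRing_of_ringKrullDim_eq_one _ hy
  -- the generic point of `Y` lies in `U` and maps to the generic point of `S`
  have hne : (U : Set Y).Nonempty := by
    rw [Set.nonempty_iff_ne_empty]
    exact fun h ↦ hU (TopologicalSpace.Opens.ext h)
  have hηU : genericPoint Y ∈ U :=
    ((genericPoint_spec Y).mem_open_set_iff U.isOpen).mpr (by simpa using hne)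
  have hsp : ∀ u : U, fU ⟨genericPoint Y, hηU⟩ ⤳ fU u := by
    intro u
    refine Specializes.map (U.ι.isOpenEmbedding.isInducing.specializes_iff.mp ?_) fU.continuous
    exact (genericPoint_spec Y).specializes trivial
  have hη : fU ⟨genericPoint Y, hηU⟩ = genericPoint S := by
    have h1 : IsGenericPoint (fU ⟨genericPoint Y, hηU⟩) Set.univ := by
      rw [IsGenericPoint, ← Set.univ_subset_iff, ← hdom.closure_eq]
      refine closure_minimal ?_ isClosed_closure
      rintro _ ⟨u, rfl⟩
      exact (hsp u).mem_closure
    exact h1.eq (genericPoint_spec S)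
  obtain ⟨κ, hκ⟩ := exists_factor_fromSpecStalk
    (U.fromSpecStalkOfMem (genericPoint Y) hηU ≫ fU) (genericPoint S)
    ((fromSpecStalkOfMem_comp_closedPoint U _ hηU fU).trans hη)
  -- affine charts
  obtain ⟨A, hA, hyA, -⟩ := exists_isAffineOpen_mem_and_subset (x := y) (U := (⊤ : Y.Opens)) trivial
  obtain ⟨B, hB, hηB, -⟩ := exists_isAffineOpen_mem_and_subset (x := genericPoint S) (U := (⊤ : S.Opens))
    trivial
  have : Nonempty A := ⟨⟨y, hyA⟩⟩
  have : Nonempty B := ⟨⟨_, hηB⟩⟩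
  obtain ⟨γY, hγY, hγY'⟩ := exists_sections_structure sY hA
  obtain ⟨γS, hγS, hγS'⟩ := exists_sections_structure sS hB
  have hγ : γS ≫ S.germToFunctionField B ≫ κ = γY ≫ Y.germToFunctionField A := by
    apply Spec.map_injective
    rw [hγY', ← Category.assoc, Spec.map_comp, hγS', ← Category.assoc, hκ, Category.assoc, hover,
      ← Category.assoc, Scheme.Opens.fromSpecStalkOfMem_ι]
  let : Algebra ℂ S.functionField := (γS ≫ S.germToFunctionField B).hom.toAlgebra
  let : Algebra S.functionField Y.functionField := κ.hom.toAlgebra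
  let : Algebra ℂ Y.functionField := (γY ≫ Y.germToFunctionField A).hom.toAlgebra
  let : Algebra ℂ Γ(Y, A) := γY.hom.toAlgebra
  have : IsScalarTower ℂ S.functionField Y.functionField :=
    .of_algebraMap_eq' (by rw [RingHom.algebraMap_toAlgebra, ← hγ]; rfl)
  have : IsScalarTower ℂ Γ(Y, A) Y.functionField := .of_algebraMap_eq' rfl
  have : Algebra.FiniteType ℂ Γ(Y, A) := hγY
  have : IsFractionRing Γ(Y, A) Y.functionField := functionField_isFractionRing_of_isAffineOpen Y A hA
  let := Y.presheaf.algebra_section_stalk ⟨y, hyA⟩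
  have hloc : IsLocalization.AtPrime (Y.presheaf.stalk y) (hA.primeIdealOf ⟨y, hyA⟩).asIdeal :=
    hA.isLocalization_stalk ⟨y, hyA⟩
  have : IsScalarTower Γ(Y, A) (Y.presheaf.stalk y) Y.functionField :=
    functionField_isScalarTower Y A ⟨y, hyA⟩
  obtain ⟨t, ht, hrange, hden⟩ := exists_generators_functionField hB γS hγS rfl
  obtain ⟨N, z, hz0, hz, hnorm, hgen, hreg, hheight⟩ :=
    exists_coordinates (k := ℂ) (K := S.functionField) (L := Y.functionField) (D := Γ(Y, A))
      (hA.primeIdealOf ⟨y, hyA⟩).asIdeal (Y.presheaf.stalk y) t ht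
  obtain ⟨S', sS', hS', hS'n, U', hU', ψ, hψ, hψr, hψs⟩ :=
    exists_normal_projective_model z hz0 hz hnorm
  obtain ⟨Q, q, j, j', hj, hj', hq, hqj, hqj'⟩ := exists_common_open hB hU'
    (S.germToFunctionField B) ψ (Scheme.germToFunctionField_injective S B) hψ _ _
    ⟨t, rfl⟩ (Subalgebra.fg_def.mpr ⟨_, Set.finite_range z, rfl⟩) hrange hψr hden (by
      intro x
      have hx : x ∈ IntermediateField.adjoin ℂ (Set.range z) := hgen ▸ trivial
      obtain ⟨a, ha, b, hb, rfl⟩ := (IntermediateField.mem_adjoin_iff_div ..).mp hx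
      rcases eq_or_ne b 0 with rfl | hb0
      · exact ⟨1, one_mem _, one_ne_zero, by simp⟩
      · exact ⟨b, hb, hb0, by rwa [mul_div_cancel₀ _ hb0]⟩)
  have hRL : Function.Injective (algebraMap (Y.presheaf.stalk y) Y.functionField) :=
    IsFractionRing.injective _ _
  have hfac : ∀ b : Γ(S', U'), ∃ c, algebraMap (Y.presheaf.stalk y) Y.functionField c =
      algebraMap S.functionField Y.functionField (ψ.hom b) := fun b ↦
    hreg _ (by rw [← SetLike.mem_coe, ← hψr]; exact ⟨b, rfl⟩)
  choose r hr using hfac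
  let r' : Γ(S', U') →+* Y.presheaf.stalk y :=
    { toFun := r
      map_one' := hRL (by simp [hr])
      map_zero' := hRL (by simp [hr])
      map_mul' := fun a b ↦ hRL (by simp [hr])
      map_add' := fun a b ↦ hRL (by simp [hr]) }
  have hgermB : S.fromSpecStalk (genericPoint S) =
      Spec.map (S.germToFunctionField B) ≫ hB.fromSpec := by
    rw [← hB.fromSpecStalk_eq_fromSpecStalk, IsAffineOpen.fromSpecStalk]
  have := hS'.2.1
  refine ⟨S', sS', hS', hS'n, ?_⟩
  exact exists_birational_and_extension sY sS sS' U hηU fU hover y κ hκ hU' ψ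
    (hψs.trans hγS') Q q hq j j' (hqj.trans hgermB.symm) hqj' (CommRingCat.ofHom r')
    (by ext b; exact hr b) (hheight _ ψ.hom hψ hψr r' hr)
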